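/- arXiv:2310.14742 — 3 statements merged into one kernel-verified Lean document; each statement's English description precedes it below -/
import Mathlib

section
/- Let d ≥ 3 and let D ⊂ ℝ^d be a bounded strongly minimally convex domain, with ε ∈ (0,1), N := closure(N_ε(∂D)) ∩ D, c > 0, F, and d_F as in the construction of the filling Finsler metric. Then the metric space (D, d_F) is Gromov hyperbolic: there exists δ ≥ 0 such that for all x₁, x₂, x₃, x₄ ∈ D, d_F(x₁,x₂) + d_F(x₃,x₄) ≤ max( d_F(x₁,x₃) + d_F(x₂,x₄), d_F(x₁,x₄) + d_F(x₂,x₃) ) + 2δ. -/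
/-!
Let `h` be the square root of the boundary distance truncated at `ε`, and put
`q(x, y) = ‖x - y‖ + max (h x) (h y)`. Up to a bounded additive error the distance `d_F` is
`2 log q(x, y) - log h(x) - log h(y)`. Since `q` satisfies the triangle inequality, the products
`q(x₁, x₂) q(x₃, x₄)` satisfy a four-point inequality with factor `4`, and the terms `log h` cancel
in the four-point condition.

*Lower bound.* For fixed `x` consider the function
`z ↦ 2 log (‖x - z‖ / A + h(x) + h(z) - (2 / A) h(z)²) - log h(z)`.
Along a curve the derivative of `h²` is, up to sign, the size of the normal velocity in the collar
and zero outside it, and the derivative of `‖x - z‖` is at most the speed. For large `A` the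
function therefore grows at most by the `F`-length; the correction `-(2 / A) h(z)²` absorbs the
contribution of the normal velocity to the derivative of `‖x - z‖`.

*Upper bound.* A compact `C²` boundary has interior and exterior tangent balls of a uniform radius
`r`. They describe the nearest-point projection explicitly, make the normal field Lipschitz, and
show that a segment of length `O(√t)` between two points at height `t` stays at height at least
`t / 2` and is almost tangential. If `q = q(x, y)` is small, one climbs from `x` and `y` along the
normals to height `q² / r` at a cost given by logarithms, and the two new points are joined by a
segment of bounded `F`-length. Otherwise one climbs to height `r` and uses that the remaining core
of `D` is compact.
-/

open scoped RealInnerProductSpace ENNReal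
open Metric Set Filter

noncomputable section

/-- Euclidean space `ℝ^d`. -/
abbrev Euc (d : ℕ) := EuclideanSpace ℝ (Fin d)

/-- The open unit disk in `ℝ²`. -/
def unitDisk : Set (Euc 2) := Metric.ball 0 1

/-- Partial derivative of `f` at `z` in the `i`-th coordinate direction. -/
def pd {d : ℕ} (i : Fin 2) (f : Euc 2 → Euc d) (z : Euc 2) : Euc d :=
  fderiv ℝ f z (EuclideanSpace.single i 1)

/-- `f` is a conformal harmonic map on the unit disk: it is `C²`, its (vector)
Laplacian vanishes (equivalently, every component is harmonic), and at each point
its two partial derivatives are orthogonal and of equal norm. -/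
def ConformalHarmonicOnDisk {d : ℕ} (f : Euc 2 → Euc d) : Prop :=
  ContDiffOn ℝ 2 f unitDisk ∧
  (∀ z ∈ unitDisk,
    fderiv ℝ (pd 0 f) z (EuclideanSpace.single 0 1)
      + fderiv ℝ (pd 1 f) z (EuclideanSpace.single 1 1) = 0) ∧
  (∀ z ∈ unitDisk, ‖pd 0 f z‖ = ‖pd 1 f z‖ ∧ ⟪pd 0 f z, pd 1 f z⟫ = 0)

/-- The minimal (Forstnerič–Kalaj) metric of a domain `D ⊆ ℝ^d`:
`g_D(x,v) = inf {1/r : r > 0, f ∈ CH(𝔻, D), f 0 = x, f_x 0 = r • v}`. -/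
def minMetric {d : ℕ} (D : Set (Euc d)) (x v : Euc d) : ℝ :=
  sInf {c : ℝ | ∃ r : ℝ, 0 < r ∧ c = 1 / r ∧
    ∃ f : Euc 2 → Euc d, ConformalHarmonicOnDisk f ∧ (∀ z ∈ unitDisk, f z ∈ D) ∧
      f 0 = x ∧ pd 0 f 0 = r • v}

/-- `γ` is a piecewise `C¹` curve on `[a, b]`. -/
def PiecewiseC1On {d : ℕ} (γ : ℝ → Euc d) (a b : ℝ) : Prop :=
  ContinuousOn γ (Set.Icc a b) ∧
  ∃ (n : ℕ) (t : Fin (n + 2) → ℝ), Monotone t ∧ t 0 = a ∧ t (Fin.last (n + 1)) = b ∧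
    ∀ i : Fin (n + 1), ContDiffOn ℝ 1 γ (Set.Icc (t i.castSucc) (t i.succ))

/-- The minimal pseudodistance `ρ_D`: infimum of minimal lengths of piecewise `C¹`
curves in `D` joining `x` to `y`. -/
def minDist {d : ℕ} (D : Set (Euc d)) (x y : Euc d) : ℝ :=
  sInf {L : ℝ | ∃ γ : ℝ → Euc d, PiecewiseC1On γ 0 1 ∧
    (∀ t ∈ Set.Icc (0:ℝ) 1, γ t ∈ D) ∧ γ 0 = x ∧ γ 1 = y ∧
    L = ∫ t in (0:ℝ)..(1:ℝ), minMetric D (γ t) (deriv γ t)}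

/-- The Gromov product `(x|y)_o` with respect to the minimal pseudodistance of `D`. -/
def gromovProd {d : ℕ} (D : Set (Euc d)) (o x y : Euc d) : ℝ :=
  (minDist D x o + minDist D y o - minDist D x y) / 2

/-- `D` is hyperbolic: the minimal pseudodistance is a genuine distance. -/
def MinHyperbolic {d : ℕ} (D : Set (Euc d)) : Prop :=
  ∀ x ∈ D, ∀ y ∈ D, x ≠ y → 0 < minDist D x y

/-- The Hessian quadratic form of `u` at `x` in direction `v`. -/
def hessQ {d : ℕ} (u : Euc d → ℝ) (x v : Euc d) : ℝ :=
  fderiv ℝ (fun y => fderiv ℝ u y v) x v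

/-- `D` is a bounded domain with `C²` boundary, described by a `C²` defining
function `u` on a neighborhood `U` of `∂D` with nonvanishing differential. -/
def IsC2BoundedDomain {d : ℕ} (D : Set (Euc d)) : Prop :=
  IsOpen D ∧ IsConnected D ∧ Bornology.IsBounded D ∧
  ∃ (U : Set (Euc d)) (u : Euc d → ℝ), IsOpen U ∧ frontier D ⊆ U ∧ ContDiffOn ℝ 2 u U ∧
    D ∩ U = {x | x ∈ U ∧ u x < 0} ∧ frontier D = {x | x ∈ U ∧ u x = 0} ∧
    ∀ x ∈ frontier D, fderiv ℝ u x ≠ 0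

/-- `D` is a bounded strongly minimally convex domain: it has a `C²` defining function
which is strongly minimally plurisubharmonic near `∂D`, i.e. the trace of its Hessian
on every 2-plane (spanned by an orthonormal pair `v, w`) is strictly positive. -/
def IsStronglyMinimallyConvex {d : ℕ} (D : Set (Euc d)) : Prop :=
  IsOpen D ∧ IsConnected D ∧ Bornology.IsBounded D ∧
  ∃ (U : Set (Euc d)) (u : Euc d → ℝ), IsOpen U ∧ frontier D ⊆ U ∧ ContDiffOn ℝ 2 u U ∧
    D ∩ U = {x | x ∈ U ∧ u x < 0} ∧ frontier D = {x | x ∈ U ∧ u x = 0} ∧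
    (∀ x ∈ frontier D, fderiv ℝ u x ≠ 0) ∧
    (∀ x ∈ U, ∀ v w : Euc d, ‖v‖ = 1 → ‖w‖ = 1 → ⟪v, w⟫ = 0 →
      0 < hessQ u x v + hessQ u x w)

/-- `D` is a bounded strongly convex domain: convex, with a `C²` defining function whose
Hessian is positive definite on the tangent space at every boundary point
(equivalently, all principal curvatures of `∂D` w.r.t. the inner normal are positive). -/
def IsStronglyConvexDomain {d : ℕ} (D : Set (Euc d)) : Prop :=
  IsOpen D ∧ IsConnected D ∧ Bornology.IsBounded D ∧ Convex ℝ D ∧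
  ∃ (U : Set (Euc d)) (u : Euc d → ℝ), IsOpen U ∧ frontier D ⊆ U ∧ ContDiffOn ℝ 2 u U ∧
    D ∩ U = {x | x ∈ U ∧ u x < 0} ∧ frontier D = {x | x ∈ U ∧ u x = 0} ∧
    (∀ x ∈ frontier D, fderiv ℝ u x ≠ 0) ∧
    (∀ ξ ∈ frontier D, ∀ w : Euc d, w ≠ 0 → fderiv ℝ u ξ w = 0 → 0 < hessQ u ξ w)

/-- For `x ∈ D` with nearest boundary point `p`, the outer unit normal direction
`n_{π(x)} = (p - x)/‖p - x‖`. -/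
def nvec {d : ℕ} (x p : Euc d) : Euc d := ‖p - x‖⁻¹ • (p - x)

/-- Normal component of `v` at `x` with nearest boundary point `p`. -/
def vN {d : ℕ} (x p v : Euc d) : Euc d := ⟪v, nvec x p⟫ • nvec x p

/-- Tangential component of `v` at `x` with nearest boundary point `p`. -/
def vT {d : ℕ} (x p v : Euc d) : Euc d := v - vN x p v

/-- The intrinsic distance `H` on the boundary `∂D`: infimum of Euclidean lengths of
piecewise `C¹` curves in `∂D` joining two boundary points. -/
def bdist {d : ℕ} (D : Set (Euc d)) (ξ η : Euc d) : ℝ :=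
  sInf {L : ℝ | ∃ α : ℝ → Euc d, PiecewiseC1On α 0 1 ∧
    (∀ t ∈ Set.Icc (0:ℝ) 1, α t ∈ frontier D) ∧ α 0 = ξ ∧ α 1 = η ∧
    L = ∫ t in (0:ℝ)..(1:ℝ), ‖deriv α t‖}

/-- `h(x) = δ_D(x)^{1/2}`. -/
def hfun {d : ℕ} (D : Set (Euc d)) (x : Euc d) : ℝ :=
  Real.sqrt (Metric.infDist x (frontier D))

/-- The length of a curve with respect to the boundary Finsler metric
`F(x,v) = ‖v_N‖/(2 δ_D(x)) + ‖v_T‖/δ_D(x)^{1/2}`. -/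
def Flen {d : ℕ} (D : Set (Euc d)) (π : Euc d → Euc d) (γ : ℝ → Euc d) : ℝ :=
  ∫ t in (0:ℝ)..(1:ℝ),
    (‖vN (γ t) (π (γ t)) (deriv γ t)‖ / (2 * Metric.infDist (γ t) (frontier D))
      + ‖vT (γ t) (π (γ t)) (deriv γ t)‖ / Real.sqrt (Metric.infDist (γ t) (frontier D)))

/-- The filling Finsler metric `F`: the boundary Finsler metric on
`N = {δ_D ≤ ε}` and `c‖v‖` elsewhere. -/
def Fmet {d : ℕ} (D : Set (Euc d)) (π : Euc d → Euc d) (ε c : ℝ) (x v : Euc d) : ℝ :=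
  if Metric.infDist x (frontier D) ≤ ε then
    ‖vN x (π x) v‖ / (2 * Metric.infDist x (frontier D))
      + ‖vT x (π x) v‖ / Real.sqrt (Metric.infDist x (frontier D))
  else c * ‖v‖

/-- The intrinsic distance `d_F` associated to the filling Finsler metric `F`. -/
def dF {d : ℕ} (D : Set (Euc d)) (π : Euc d → Euc d) (ε c : ℝ) (x y : Euc d) : ℝ :=
  sInf {L : ℝ | ∃ γ : ℝ → Euc d, PiecewiseC1On γ 0 1 ∧
    (∀ t ∈ Set.Icc (0:ℝ) 1, γ t ∈ D) ∧ γ 0 = x ∧ γ 1 = y ∧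
    L = ∫ t in (0:ℝ)..(1:ℝ), Fmet D π ε c (γ t) (deriv γ t)}

/-- The hyperbolic filling distance
`d_H(x,y) = 2 log((H(π x, π y) + h(x) ∨ h(y)) / √(h(x) h(y)))`. -/
def dH {d : ℕ} (D : Set (Euc d)) (π : Euc d → Euc d) (x y : Euc d) : ℝ :=
  2 * Real.log ((bdist D (π x) (π y) + max (hfun D x) (hfun D y)) /
    Real.sqrt (hfun D x * hfun D y))

/-- `δ̂_D(x,v)`: the supremum over 2-dimensional linear subspaces `Λ ∋ v` of the
distance (in `ℝ≥0∞`, so `∞` if `x + Λ ⊆ D`) from `x` to `(x + Λ) \ D`. -/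
def deltaHat {d : ℕ} (D : Set (Euc d)) (x v : Euc d) : ℝ≥0∞ :=
  ⨆ (Λ : Submodule ℝ (Euc d)) (_ : Module.finrank ℝ Λ = 2) (_ : v ∈ Λ),
    ⨅ (y : Euc d) (_ : y - x ∈ Λ ∧ y ∉ D), edist x y

/-- The positive parameter at which the ray `t ↦ x + t • v` exits the convex domain `D`
(equal to `0`, by the `sInf ∅ = 0` convention, when the ray stays in `D`,
i.e. when the corresponding chord endpoint is the point at infinity). -/
def chordParam {d : ℕ} (D : Set (Euc d)) (x v : Euc d) : ℝ :=
  sInf {s : ℝ | 0 < s ∧ x + s • v ∉ D}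

/-- The Hilbert Finsler metric `h_D(x,v) = (‖v‖/2)(1/‖x-a‖ + 1/‖x-b‖)` of a convex
domain, with the convention `1/‖x-∞‖ = 0` (here `‖x-b‖ = chordParam D x v • ‖v‖` and
`‖x-a‖ = chordParam D x (-v) • ‖v‖`, and division by zero is zero). -/
def hilbertFinsler {d : ℕ} (D : Set (Euc d)) (x v : Euc d) : ℝ :=
  (1/2) * (1 / chordParam D x v + 1 / chordParam D x (-v))

/- The Hilbert distance of a convex domain: for `x ≠ y`,
`H_D(x,y) = ½ log((‖x-b‖ ‖y-a‖)/(‖x-a‖ ‖y-b‖))` where `a, x, y, b` are aligned on the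
chord through `x, y`, with the convention that ratios involving the point at infinity
(detected by `chordParam = 0`) are equal to `1`. -/
open Classical in
def hilbertDist {d : ℕ} (D : Set (Euc d)) (x y : Euc d) : ℝ :=
  if x = y then 0 else
    (1/2) * Real.log
      ((if chordParam D x (y - x) = 0 then 1
        else chordParam D x (y - x) / (chordParam D x (y - x) - 1)) *
       (if chordParam D x (x - y) = 0 then 1
        else (1 + chordParam D x (x - y)) / chordParam D x (x - y)))

/-! ### Gromov hyperbolicity -/

section GromovHyperbolicity

variable {X : Type*} {S : Set X} {ρ q : X → X → ℝ}

/-- Gromov hyperbolicity of the restriction of `ρ` to `S`, in the form of the four-point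
condition. -/
def IsGromovHyperbolicOn (S : Set X) (ρ : X → X → ℝ) : Prop :=
  ∃ δ : ℝ, 0 ≤ δ ∧ ∀ x₁ ∈ S, ∀ x₂ ∈ S, ∀ x₃ ∈ S, ∀ x₄ ∈ S,
    ρ x₁ x₂ + ρ x₃ x₄ ≤ max (ρ x₁ x₃ + ρ x₂ x₄) (ρ x₁ x₄ + ρ x₂ x₃) + 2 * δ

theorem mul_le_four_mul_max (hpos : ∀ x y, 0 ≤ q x y) (hsymm : ∀ x y, q x y = q y x)
    (htri : ∀ x y z, q x z ≤ q x y + q y z) (x₁ x₂ x₃ x₄ : X) :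
    q x₁ x₂ * q x₃ x₄ ≤ 4 * max (q x₁ x₃ * q x₂ x₄) (q x₁ x₄ * q x₂ x₃) := by
  -- Both factors are estimated by the paths avoiding the longest of the four other sides.
  have avoid_longest {a b l m s t : ℝ} (hb : 0 ≤ b) (hm : 0 ≤ m) (hs : 0 ≤ s)
      (ha : a ≤ s + m) (hb' : b ≤ t + m) (hml : m ≤ l) (hsl : s ≤ l) (htl : t ≤ l) :
      a * b ≤ 3 * (l * m) + s * t := by
    calc a * b ≤ (s + m) * (t + m) := by gcongr
      _ = (m + s + t) * m + s * t := by ring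
      _ ≤ (l + l + l) * m + s * t := by gcongr
      _ = 3 * (l * m) + s * t := by ring
  have h₁ := htri x₁ x₃ x₂
  have h₂ := htri x₁ x₄ x₂
  have h₃ := htri x₃ x₁ x₄
  have h₄ := htri x₃ x₂ x₄
  rw [hsymm x₃ x₂] at h₁ h₄
  rw [hsymm x₄ x₂] at h₂
  rw [hsymm x₃ x₁] at h₃
  have hl := le_max_left (q x₁ x₃ * q x₂ x₄) (q x₁ x₄ * q x₂ x₃)
  have hr := le_max_right (q x₁ x₃ * q x₂ x₄) (q x₁ x₄ * q x₂ x₃)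
  have hab := hpos x₃ x₄
  have longest₁₃ := avoid_longest (l := q x₁ x₃) hab (hpos x₂ x₄) (hpos x₁ x₄) h₂ h₄
  have longest₂₄ := avoid_longest (l := q x₂ x₄) hab (hpos x₁ x₃) (hpos x₂ x₃)
    (h₁.trans_eq (add_comm _ _)) (h₃.trans_eq (add_comm _ _))
  have longest₁₄ := avoid_longest (l := q x₁ x₄) hab (hpos x₂ x₃) (hpos x₁ x₃)
    h₁ (h₄.trans_eq (add_comm _ _))
  have longest₂₃ := avoid_longest (l := q x₂ x₃) hab (hpos x₁ x₄) (hpos x₂ x₄)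
    (h₂.trans_eq (add_comm _ _)) h₃
  grind

theorem isGromovHyperbolicOn_of_abs_sub_two_mul_log_le {f : X → ℝ} {C : ℝ}
    (hpos : ∀ x y, 0 ≤ q x y) (hsymm : ∀ x y, q x y = q y x)
    (htri : ∀ x y z, q x z ≤ q x y + q y z) (hne : ∀ x ∈ S, ∀ y ∈ S, q x y ≠ 0)
    (hρ : ∀ x ∈ S, ∀ y ∈ S, |ρ x y - (2 * Real.log (q x y) - f x - f y)| ≤ C) :
    IsGromovHyperbolicOn S ρ := by
  rcases S.eq_empty_or_nonempty with rfl | ⟨x, hx⟩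
  · exact ⟨0, le_rfl, by simp⟩
  have hC : 0 ≤ C := (abs_nonneg _).trans (hρ x hx x hx)
  refine ⟨Real.log 4 + 2 * C, by positivity, fun x₁ h₁ x₂ h₂ x₃ h₃ x₄ h₄ => ?_⟩
  have logq : Real.log (q x₁ x₂) + Real.log (q x₃ x₄) ≤ Real.log 4 +
      max (Real.log (q x₁ x₃) + Real.log (q x₂ x₄))
        (Real.log (q x₁ x₄) + Real.log (q x₂ x₃)) := by
    have p : ∀ {x y}, x ∈ S → y ∈ S → 0 < q x y := fun hx hy =>
      (hpos _ _).lt_of_ne' (hne _ hx _ hy)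
    have log_mul {x y z w} (hx : x ∈ S) (hy : y ∈ S) (hz : z ∈ S) (hw : w ∈ S) :=
      Real.log_mul (hne x hx y hy) (hne z hz w hw)
    rw [← log_mul h₁ h₂ h₃ h₄, ← log_mul h₁ h₃ h₂ h₄, ← log_mul h₁ h₄ h₂ h₃,
      ← Real.strictMonoOn_log.monotoneOn.map_max (mul_pos (p h₁ h₃) (p h₂ h₄))
        (mul_pos (p h₁ h₄) (p h₂ h₃)), ← Real.log_mul four_ne_zero]
    · exact Real.log_le_log (mul_pos (p h₁ h₂) (p h₃ h₄))
        (mul_le_four_mul_max hpos hsymm htri _ _ _ _)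
    · exact ((mul_pos (p h₁ h₃) (p h₂ h₄)).trans_le (le_max_left _ _)).ne'
  have b {x y} (hx : x ∈ S) (hy : y ∈ S) := abs_le.1 (hρ x hx y hy)
  rcases max_choice (Real.log (q x₁ x₃) + Real.log (q x₂ x₄))
      (Real.log (q x₁ x₄) + Real.log (q x₂ x₃)) with hmax | hmax <;> rw [hmax] at logq
  · refine le_trans ?_ (add_le_add_left (le_max_left _ _) _)
    linarith [(b h₁ h₂).2, (b h₃ h₄).2, (b h₁ h₃).1, (b h₂ h₄).1]
  · refine le_trans ?_ (add_le_add_left (le_max_right _ _) _)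
    linarith [(b h₁ h₂).2, (b h₃ h₄).2, (b h₁ h₄).1, (b h₂ h₃).1]

end GromovHyperbolicity

/-! ### Preliminaries on domains and Lipschitz functions -/

section Frontier

theorem subset_of_isPreconnected_of_disjoint_frontier {X : Type*} [TopologicalSpace X]
    {D S : Set X} (hS : IsPreconnected S) (hSD : (S ∩ D).Nonempty)
    (hdisj : Disjoint S (frontier D)) : S ⊆ D := by
  have hcover : S ⊆ interior D ∪ (closure D)ᶜ := fun y hy => by
    by_contra! h
    rw [mem_union, not_or, notMem_compl_iff] at h
    exact disjoint_left.1 hdisj hy ⟨h.2, h.1⟩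
  obtain ⟨x, hxS, hxD⟩ := hSD
  refine (hS.subset_left_of_subset_union isOpen_interior isClosed_closure.isOpen_compl
    (disjoint_compl_right.mono_left interior_subset_closure) hcover
    ⟨x, hxS, ?_⟩).trans interior_subset
  exact (hcover hxS).resolve_right fun h => h (subset_closure hxD)

theorem infDist_frontier_pos {X : Type*} [PseudoMetricSpace X] {D : Set X} (hD : IsOpen D)
    (hne : (frontier D).Nonempty) {x : X} (hx : x ∈ D) : 0 < infDist x (frontier D) :=
  (isClosed_frontier.notMem_iff_infDist_pos hne).1
    (disjoint_left.1 (disjoint_frontier_iff_isOpen.2 hD).symm hx)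

theorem ball_infDist_frontier_subset {E : Type*} [SeminormedAddCommGroup E] [NormedSpace ℝ E]
    {D : Set E} {x : E} (hx : x ∈ D) : ball x (infDist x (frontier D)) ⊆ D := by
  rcases (ball x (infDist x (frontier D))).eq_empty_or_nonempty with h | h
  · simp [h]
  · exact subset_of_isPreconnected_of_disjoint_frontier (convex_ball _ _).isPreconnected
      ⟨x, mem_ball_self (nonempty_ball.1 h), hx⟩ disjoint_ball_infDist

theorem continuousOn_of_unique_nearest {X : Type*} [PseudoMetricSpace X] {K S : Set X} {π : X → X}
    (hK : IsCompact K) (hmem : ∀ x ∈ S, π x ∈ K)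
    (hdist : ∀ x ∈ S, dist x (π x) = infDist x K)
    (huniq : ∀ x ∈ S, ∀ q ∈ K, dist x q = infDist x K → q = π x) : ContinuousOn π S := by
  refine fun x hx => hK.tendsto_nhds_of_unique_mapClusterPt
    (eventually_nhdsWithin_of_forall hmem) fun q hq hcl => huniq x hx q hq ?_
  obtain ⟨U, hU, hUq⟩ := mapClusterPt_iff_ultrafilter.1 hcl
  have hUx : Tendsto id (U : Filter X) (nhds x) := hU.trans nhdsWithin_le_nhds
  have hUinf : Tendsto (fun y => infDist y K) (U : Filter X) (nhds (infDist x K)) :=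
    (continuous_infDist_pt K).continuousAt.tendsto.comp hUx
  refine tendsto_nhds_unique (hUx.dist hUq) (hUinf.congr' ?_)
  filter_upwards [hU self_mem_nhdsWithin] with y hy using (hdist y hy).symm

end Frontier

section Lipschitz

open MeasureTheory NNReal

theorem lipschitzOnWith_Icc_of_Icc_of_Icc {X : Type*} [PseudoMetricSpace X] {f : ℝ → X} {K : ℝ≥0}
    {a b e : ℝ} (hf : LipschitzOnWith K f (Icc a b)) (hf' : LipschitzOnWith K f (Icc b e)) :
    LipschitzOnWith K f (Icc a e) := by
  refine LipschitzOnWith.of_dist_le_mul fun x hx y hy => ?_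
  wlog hxy : x ≤ y generalizing x y
  · simpa only [dist_comm] using this y hy x hx (le_of_not_ge hxy)
  rcases le_total y b with hyb | hby
  · exact hf.dist_le_mul x ⟨hx.1, hxy.trans hyb⟩ y ⟨hy.1, hyb⟩
  rcases le_total b x with hbx | hxb
  · exact hf'.dist_le_mul x ⟨hbx, hx.2⟩ y ⟨hby, hy.2⟩
  calc dist (f x) (f y) ≤ dist (f x) (f b) + dist (f b) (f y) := dist_triangle _ _ _
    _ ≤ K * dist x b + K * dist b y := add_le_add
        (hf.dist_le_mul x ⟨hx.1, hxb⟩ b ⟨hx.1.trans hxb, le_rfl⟩)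
        (hf'.dist_le_mul b ⟨le_rfl, hby.trans hy.2⟩ y ⟨hby, hy.2⟩)
    _ = K * dist x y := by
      rw [dist_comm x b, dist_comm b y, dist_comm x y, Real.dist_eq, Real.dist_eq, Real.dist_eq,
        abs_of_nonneg (sub_nonneg.2 hxb), abs_of_nonneg (sub_nonneg.2 hby),
        abs_of_nonneg (sub_nonneg.2 hxy)]
      ring

theorem ae_differentiableAt_of_lipschitzOnWith_Icc {E : Type*} [NormedAddCommGroup E]
    [NormedSpace ℝ E] [FiniteDimensional ℝ E] {f : ℝ → E} {K : ℝ≥0} {a b : ℝ}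
    (hf : LipschitzOnWith K f (Icc a b)) : ∀ᵐ t, t ∈ Ioo a b → DifferentiableAt ℝ f t := by
  filter_upwards [hf.ae_differentiableWithinAt_of_mem_real] with t h ht
  exact (h (Ioo_subset_Icc_self ht)).differentiableAt (Icc_mem_nhds ht.1 ht.2)

theorem sub_le_integral_of_deriv_le {f g : ℝ → ℝ} {K : ℝ≥0} {a b : ℝ} (hab : a ≤ b)
    (hf : LipschitzOnWith K f (Icc a b)) (hg : IntervalIntegrable g volume a b)
    (hfg : ∀ᵐ t, t ∈ Ioo a b → deriv f t ≤ g t) : f b - f a ≤ ∫ t in a..b, g t := by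
  rw [← uIcc_of_le hab] at hf
  have hac := hf.absolutelyContinuousOnInterval
  rw [← hac.integral_deriv_eq_sub]
  refine intervalIntegral.integral_mono_ae_restrict hab hac.intervalIntegrable_deriv hg ?_
  rw [← restrict_Ioo_eq_restrict_Icc]
  exact (ae_restrict_iff' measurableSet_Ioo).2 hfg

theorem abs_deriv_dist_le {E : Type*} [NormedAddCommGroup E] [NormedSpace ℝ E] {γ : ℝ → E}
    {t ρ' : ℝ} {v z : E} (hγ : HasDerivAt γ v t) (hρ : HasDerivAt (fun s => dist z (γ s)) ρ' t) :
    |ρ'| ≤ ‖v‖ := by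
  refine le_of_tendsto_of_tendsto' hρ.tendsto_slope.abs hγ.tendsto_slope.norm fun s => ?_
  rw [slope_def_field, slope_def_module, norm_smul, abs_div, norm_inv, Real.norm_eq_abs,
    div_eq_inv_mul, ← dist_eq_norm, dist_comm z, dist_comm z]
  gcongr
  exact abs_dist_sub_le _ _ _

end Lipschitz

/-! ### Piecewise `C¹` curves -/

namespace PiecewiseC1On

variable {d : ℕ} {γ γ' : ℝ → Euc d} {a b e : ℝ}

theorem of_contDiffOn (hab : a ≤ b) (h : ContDiffOn ℝ 1 γ (Icc a b)) : PiecewiseC1On γ a b := by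
  refine ⟨h.continuousOn, 0, ![a, b], Fin.monotone_iff_le_succ.2 fun i => ?_, rfl, rfl,
    fun i => ?_⟩ <;>
  · fin_cases i
    assumption

theorem congr (h : PiecewiseC1On γ a b) (he : EqOn γ' γ (Icc a b)) : PiecewiseC1On γ' a b := by
  obtain ⟨hc, n, t, hm, rfl, rfl, ht⟩ := h
  exact ⟨hc.congr he, n, t, hm, rfl, rfl, fun i => (ht i).congr
    (he.mono (Icc_subset_Icc (hm (Fin.zero_le _)) (hm (Fin.le_last _))))⟩

theorem induction {motive : ℝ → Prop} (h : PiecewiseC1On γ a b) (left : motive a)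
    (piece : ∀ s s', a ≤ s → s ≤ s' → ContDiffOn ℝ 1 γ (Icc s s') → motive s → motive s') :
    motive b := by
  obtain ⟨-, n, t, hm, rfl, rfl, ht⟩ := h
  have hall (i) : motive (t i) := Fin.induction left
    (fun i => piece _ _ (hm (Fin.zero_le _)) (hm i.castSucc_le_succ) (ht i)) i
  exact hall _

theorem snoc (h : PiecewiseC1On γ a b) (hab : a ≤ b) (hbe : b ≤ e)
    (hγ : ContDiffOn ℝ 1 γ (Icc b e)) : PiecewiseC1On γ a e := by
  obtain ⟨hc, n, t, hm, rfl, rfl, ht⟩ := h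
  refine ⟨?_, n + 1, Fin.snoc t e, Fin.monotone_iff_le_succ.2 fun i => ?_, ?_,
    Fin.snoc_last .., fun i => ?_⟩
  · rw [← Icc_union_Icc_eq_Icc hab hbe]
    exact hc.union_of_isClosed hγ.continuousOn isClosed_Icc isClosed_Icc
  · cases i using Fin.lastCases with
    | last => simpa using hbe
    | cast i =>
      rw [Fin.succ_castSucc, Fin.snoc_castSucc, Fin.snoc_castSucc]
      exact hm i.castSucc_le_succ
  · exact Fin.snoc_castSucc (α := fun _ => ℝ) (p := t) (i := 0) ..
  · cases i using Fin.lastCases with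
    | last => simpa using hγ
    | cast i =>
      rw [Fin.succ_castSucc, Fin.snoc_castSucc, Fin.snoc_castSucc]
      exact ht i

theorem append (h : PiecewiseC1On γ a b) (h' : PiecewiseC1On γ b e) (hab : a ≤ b) :
    PiecewiseC1On γ a e :=
  h'.induction h fun _ _ hs hss' hγ ih => ih.snoc (hab.trans hs) hss' hγ

theorem exists_lipschitzOnWith (h : PiecewiseC1On γ a b) :
    ∃ K, LipschitzOnWith K γ (Icc a b) := by
  refine h.induction (motive := fun s => ∃ K, LipschitzOnWith K γ (Icc a s)) ⟨0, by simp⟩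
    fun _ _ _ _ hγ ⟨K, hK⟩ => ?_
  obtain ⟨K', hK'⟩ := hγ.exists_lipschitzOnWith one_ne_zero (convex_Icc _ _) isCompact_Icc
  exact ⟨max K K', lipschitzOnWith_Icc_of_Icc_of_Icc (hK.weaken (le_max_left _ _))
    (hK'.weaken (le_max_right _ _))⟩

theorem comp_affine {k p : ℝ} (hk : 0 < k) (h : PiecewiseC1On γ (k * a + p) (k * b + p)) :
    PiecewiseC1On (fun s => γ (k * s + p)) a b := by
  obtain ⟨hc, n, t, hm, h0, h1, ht⟩ := h
  refine ⟨hc.comp (by fun_prop) fun s hs => ⟨?_, ?_⟩, n, fun i => (t i - p) / k, ?_, ?_, ?_, ?_⟩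
  · have := hs.1
    gcongr
  · have := hs.2
    gcongr
  · intro i j hij
    have := hm hij
    simp only
    gcongr
  · simp only [h0]
    field_simp
    ring
  · simp only [h1]
    field_simp
    ring
  · refine fun i => (ht i).comp (by fun_prop) fun s hs => ⟨?_, ?_⟩
    · linarith [(div_le_iff₀ hk).1 hs.1]
    · linarith [(le_div_iff₀ hk).1 hs.2]

theorem comp_const_sub {k : ℝ} (h : PiecewiseC1On γ (k - b) (k - a)) :
    PiecewiseC1On (fun s => γ (k - s)) a b := by
  obtain ⟨hc, n, t, hm, h0, h1, ht⟩ := h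
  refine ⟨hc.comp (by fun_prop) fun s hs => ⟨?_, ?_⟩, n, fun i => k - t i.rev, ?_, ?_, ?_, ?_⟩
  · linarith [hs.2]
  · linarith [hs.1]
  · exact fun i j hij => sub_le_sub_left (hm (Fin.rev_le_rev.2 hij)) k
  · simp [h1]
  · simp [h0]
  · refine fun i => (ht i.rev).comp (by fun_prop) fun s hs => ?_
    simp only [Fin.rev_castSucc, Fin.rev_succ] at hs
    exact ⟨le_sub_comm.1 hs.2, sub_le_comm.1 hs.1⟩

end PiecewiseC1On

/-! ### The filling Finsler metric -/

section Fmet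

variable {d : ℕ} {D : Set (Euc d)} {π : Euc d → Euc d} {ε c : ℝ}

theorem norm_nvec_le (x p : Euc d) : ‖nvec x p‖ ≤ 1 := by
  rw [nvec, norm_smul, norm_inv, norm_norm]
  exact inv_mul_le_one

theorem norm_nvec {x p : Euc d} (h : p ≠ x) : ‖nvec x p‖ = 1 := by
  rw [nvec, norm_smul, norm_inv, norm_norm, inv_mul_cancel₀ (norm_ne_zero_iff.2 (sub_ne_zero.2 h))]

theorem norm_vN {x p : Euc d} (h : p ≠ x) (v : Euc d) : ‖vN x p v‖ = |⟪v, nvec x p⟫| := by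
  rw [vN, norm_smul, norm_nvec h, mul_one, Real.norm_eq_abs]

theorem norm_vN_le (x p v : Euc d) : ‖vN x p v‖ ≤ ‖v‖ := by
  have hn := norm_nvec_le x p
  calc ‖vN x p v‖ = ‖⟪v, nvec x p⟫‖ * ‖nvec x p‖ := norm_smul _ _
    _ ≤ ‖v‖ * ‖nvec x p‖ * ‖nvec x p‖ := by gcongr; exact norm_inner_le_norm _ _
    _ ≤ ‖v‖ * 1 * 1 := by gcongr
    _ = ‖v‖ := by ring

theorem norm_vT_le (x p v : Euc d) : ‖vT x p v‖ ≤ 2 * ‖v‖ := by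
  rw [vT]
  linarith [norm_sub_le v (vN x p v), norm_vN_le x p v]

theorem norm_le_norm_vN_add_norm_vT (x p v : Euc d) : ‖v‖ ≤ ‖vN x p v‖ + ‖vT x p v‖ := by
  calc ‖v‖ = ‖vN x p v + vT x p v‖ := by rw [vT, add_sub_cancel]
    _ ≤ _ := norm_add_le _ _

theorem vN_smul (x p v : Euc d) (k : ℝ) : vN x p (k • v) = k • vN x p v := by
  rw [vN, vN, real_inner_smul_left, mul_smul]

theorem vT_smul (x p v : Euc d) (k : ℝ) : vT x p (k • v) = k • vT x p v := by
  rw [vT, vT, vN_smul, smul_sub]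

theorem Fmet_nonneg (hc : 0 ≤ c) (x v : Euc d) : 0 ≤ Fmet D π ε c x v := by
  have := infDist_nonneg (x := x) (s := frontier D)
  rw [Fmet]
  split_ifs <;> positivity

theorem Fmet_smul (x v : Euc d) (k : ℝ) : Fmet D π ε c x (k • v) = |k| * Fmet D π ε c x v := by
  rw [Fmet, Fmet, vN_smul, vT_smul, norm_smul, norm_smul, norm_smul, Real.norm_eq_abs]
  split_ifs <;> ring

theorem Fmet_le_mul_norm {m : ℝ} (hm : 0 < m) (hc : 0 ≤ c) {x : Euc d}
    (hx : m ≤ infDist x (frontier D)) (v : Euc d) :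
    Fmet D π ε c x v ≤ (1 / (2 * m) + 2 / √m + c) * ‖v‖ := by
  have hN := norm_vN_le x (π x) v
  have hT := norm_vT_le x (π x) v
  have := Real.sqrt_pos.2 hm
  rw [Fmet]
  split_ifs
  · calc _ ≤ ‖v‖ / (2 * m) + 2 * ‖v‖ / √m := by gcongr
      _ = (1 / (2 * m) + 2 / √m + 0) * ‖v‖ := by ring
      _ ≤ _ := by gcongr
  · gcongr
    have : 0 ≤ 1 / (2 * m) + 2 / √m := by positivity
    linarith

theorem mul_norm_le_Fmet {κ : ℝ} (hκ : 0 ≤ κ) (hκN : κ ≤ 1 / (2 * ε)) (hκT : κ ≤ 1 / √ε)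
    (hκc : κ ≤ c) {x : Euc d} (hx : ε ≤ infDist x (frontier D)) (v : Euc d) :
    κ * ‖v‖ ≤ Fmet D π ε c x v := by
  rw [Fmet]
  split_ifs with h
  · rw [le_antisymm h hx]
    calc κ * ‖v‖ ≤ κ * (‖vN x (π x) v‖ + ‖vT x (π x) v‖) := by
          gcongr
          exact norm_le_norm_vN_add_norm_vT _ _ _
      _ = κ * ‖vN x (π x) v‖ + κ * ‖vT x (π x) v‖ := mul_add _ _ _
      _ ≤ 1 / (2 * ε) * ‖vN x (π x) v‖ + 1 / √ε * ‖vT x (π x) v‖ := by gcongr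
      _ = _ := by ring
  · gcongr

theorem measurable_Fmet (hπ : ContinuousOn π {x | infDist x (frontier D) ≤ ε}) :
    Measurable fun p : Euc d × Euc d => Fmet D π ε c p.1 p.2 := by
  classical
  set S : Set (Euc d) := {x | infDist x (frontier D) ≤ ε}
  have hS : MeasurableSet S :=
    (isClosed_le (continuous_infDist_pt _) continuous_const).measurableSet
  -- `Fmet` only sees the values of `π` on `S`, so `π` may be taken to be measurable.
  have hpiece : (fun p : Euc d × Euc d => Fmet D π ε c p.1 p.2) =
      fun p => Fmet D (S.piecewise π 0) ε c p.1 p.2 := by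
    ext p
    by_cases h : p.1 ∈ S
    · simp only [Fmet, piecewise_eq_of_mem _ _ _ h]
    · simp only [Fmet, if_neg (show ¬infDist p.1 (frontier D) ≤ ε from h)]
  have hp : Measurable (S.piecewise π 0) := hπ.measurable_piecewise continuousOn_const hS
  have : Measurable fun p : Euc d × Euc d => S.piecewise π 0 p.1 := hp.comp measurable_fst
  rw [hpiece]
  simp only [Fmet, vT, vN, nvec]
  exact Measurable.ite (measurable_fst hS) (by fun_prop) (by fun_prop)

end Fmet

/-! ### The intrinsic distance -/

/-- `γ` restricted to `[a, b]` is an admissible curve of `D` from `x` to `y`, as in the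
definition of `dF`. -/
structure IsCurveIn {d : ℕ} (D : Set (Euc d)) (γ : ℝ → Euc d) (a b : ℝ) (x y : Euc d) : Prop where
  piecewiseC1On : PiecewiseC1On γ a b
  mapsTo : MapsTo γ (Icc a b) D
  left : γ a = x
  right : γ b = y

/-- The length of `γ` on `[a, b]` with respect to the filling Finsler metric. -/
def FmetLength {d : ℕ} (D : Set (Euc d)) (π : Euc d → Euc d) (ε c : ℝ) (γ : ℝ → Euc d)
    (a b : ℝ) : ℝ :=
  ∫ t in a..b, Fmet D π ε c (γ t) (deriv γ t)

/-- The standing assumptions on the domain `D`, the projection `π` and the parameters `ε`, `c`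
that do not involve the regularity of the boundary. -/
structure FillingData {d : ℕ} (D : Set (Euc d)) (π : Euc d → Euc d) (ε c : ℝ) : Prop where
  isOpen : IsOpen D
  isConnected : IsConnected D
  isBounded : Bornology.IsBounded D
  collar_pos : 0 < ε
  core_pos : 0 < c
  proj : ∀ x : Euc d, infDist x (frontier D) ≤ ε →
    π x ∈ frontier D ∧ dist x (π x) = infDist x (frontier D) ∧
      ∀ q ∈ frontier D, dist x q = infDist x (frontier D) → q = π x

section IntrinsicDistance

variable {d : ℕ} {D : Set (Euc d)} {π : Euc d → Euc d} {ε c : ℝ} {γ γ' : ℝ → Euc d}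
  {a b e : ℝ} {x y z : Euc d}

theorem isCurveIn_segment (h : segment ℝ x y ⊆ D) :
    IsCurveIn D (fun θ : ℝ => x + θ • (y - x)) 0 1 x y where
  piecewiseC1On := .of_contDiffOn zero_le_one (by fun_prop)
  mapsTo θ hθ := h (segment_eq_image' ℝ x y ▸ mem_image_of_mem _ hθ)
  left := by simp
  right := by simp

theorem FmetLength_nonneg (hc : 0 ≤ c) (hab : a ≤ b) : 0 ≤ FmetLength D π ε c γ a b :=
  intervalIntegral.integral_nonneg hab fun _ _ => Fmet_nonneg hc _ _

theorem FmetLength_congr (hab : a ≤ b) (h : EqOn γ' γ (Icc a b)) :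
    FmetLength D π ε c γ' a b = FmetLength D π ε c γ a b := by
  refine intervalIntegral.integral_congr_Ioo_of_le hab fun t ht => ?_
  have hev : γ' =ᶠ[nhds t] γ := h.eventuallyEq_of_mem (Icc_mem_nhds ht.1 ht.2)
  simp only [hev.deriv_eq, hev.eq_of_nhds]

theorem FmetLength_comp_affine {k : ℝ} (hk : k ≠ 0) (p : ℝ) :
    FmetLength D π ε c (fun s => γ (k * s + p)) a b =
      |k| * k⁻¹ * FmetLength D π ε c γ (k * a + p) (k * b + p) := by
  have hderiv (s : ℝ) : deriv (fun s => γ (k * s + p)) s = k • deriv γ (k * s + p) := by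
    rw [deriv_comp_mul_left k (fun t => γ (t + p)), deriv_comp_add_const]
  simp only [FmetLength, hderiv, Fmet_smul, intervalIntegral.integral_const_mul]
  rw [intervalIntegral.integral_comp_mul_add (fun t => Fmet D π ε c (γ t) (deriv γ t)) hk,
    smul_eq_mul, mul_assoc]

theorem FmetLength_comp_one_sub :
    FmetLength D π ε c (fun s => γ (1 - s)) 0 1 = FmetLength D π ε c γ 0 1 := by
  simpa [FmetLength, neg_add_eq_sub, intervalIntegral.integral_symm (0 : ℝ) 1] using
    FmetLength_comp_affine (D := D) (π := π) (ε := ε) (c := c) (γ := γ) (a := 0) (b := 1)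
      (neg_ne_zero.2 one_ne_zero) 1

namespace IsCurveIn

theorem comp_affine {k p : ℝ} (hk : 0 < k) (h : IsCurveIn D γ (k * a + p) (k * b + p) x y) :
    IsCurveIn D (fun s => γ (k * s + p)) a b x y where
  piecewiseC1On := h.piecewiseC1On.comp_affine hk
  mapsTo s hs := h.mapsTo ⟨by have := hs.1; gcongr, by have := hs.2; gcongr⟩
  left := h.left
  right := h.right

theorem reverse (h : IsCurveIn D γ 0 1 x y) : IsCurveIn D (fun s => γ (1 - s)) 0 1 y x where
  piecewiseC1On := .comp_const_sub (by simpa using h.piecewiseC1On)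
  mapsTo s hs := h.mapsTo ⟨sub_nonneg.2 hs.2, sub_le_self _ hs.1⟩
  left := by simpa using h.right
  right := by simpa using h.left

theorem congr (h : IsCurveIn D γ a b x y) (hab : a ≤ b) (he : EqOn γ' γ (Icc a b)) :
    IsCurveIn D γ' a b x y where
  piecewiseC1On := h.piecewiseC1On.congr he
  mapsTo := h.mapsTo.congr he.symm
  left := (he (left_mem_Icc.2 hab)).trans h.left
  right := (he (right_mem_Icc.2 hab)).trans h.right

theorem append (h : IsCurveIn D γ a b x y) (h' : IsCurveIn D γ b e y z) (hab : a ≤ b)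
    (hbe : b ≤ e) : IsCurveIn D γ a e x z where
  piecewiseC1On := h.piecewiseC1On.append h'.piecewiseC1On hab
  mapsTo := by
    rw [← Icc_union_Icc_eq_Icc hab hbe]
    exact h.mapsTo.union h'.mapsTo
  left := h.left
  right := h'.right

theorem exists_le_infDist (h : IsCurveIn D γ a b x y) (hD : IsOpen D)
    (hne : (frontier D).Nonempty) (hab : a ≤ b) :
    ∃ m > 0, ∀ t ∈ Icc a b, m ≤ infDist (γ t) (frontier D) := by
  obtain ⟨t, ht, hmin⟩ := isCompact_Icc.exists_isMinOn (nonempty_Icc.2 hab)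
    ((continuous_infDist_pt (frontier D)).comp_continuousOn h.piecewiseC1On.1)
  exact ⟨_, infDist_frontier_pos hD hne (h.mapsTo ht), fun s hs => hmin hs⟩

end IsCurveIn

theorem dF_le_FmetLength_unit (hc : 0 ≤ c) (h : IsCurveIn D γ 0 1 x y) :
    dF D π ε c x y ≤ FmetLength D π ε c γ 0 1 := by
  refine csInf_le ⟨0, ?_⟩ ⟨γ, h.piecewiseC1On, h.mapsTo, h.left, h.right, rfl⟩
  rintro L ⟨γ, -, -, -, -, rfl⟩
  exact FmetLength_nonneg hc zero_le_one

theorem dF_le_FmetLength (hc : 0 ≤ c) (hab : a < b) (h : IsCurveIn D γ a b x y) :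
    dF D π ε c x y ≤ FmetLength D π ε c γ a b := by
  have hk : 0 < b - a := sub_pos.2 hab
  have h' : IsCurveIn D γ ((b - a) * 0 + a) ((b - a) * 1 + a) x y := by simpa using h
  refine (dF_le_FmetLength_unit hc (h'.comp_affine hk)).trans_eq ?_
  rw [FmetLength_comp_affine hk.ne', abs_of_pos hk, mul_inv_cancel₀ hk.ne', one_mul, mul_zero,
    mul_one, zero_add, sub_add_cancel]

theorem le_dF {L : ℝ} (hxy : ∃ γ, IsCurveIn D γ 0 1 x y)
    (hL : ∀ γ, IsCurveIn D γ 0 1 x y → L ≤ FmetLength D π ε c γ 0 1) : L ≤ dF D π ε c x y := by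
  obtain ⟨γ, h⟩ := hxy
  refine le_csInf ⟨_, γ, h.piecewiseC1On, h.mapsTo, h.left, h.right, rfl⟩ ?_
  rintro L ⟨γ, h₁, h₂, h₃, h₄, rfl⟩
  exact hL γ ⟨h₁, h₂, h₃, h₄⟩

theorem dF_nonneg (hc : 0 ≤ c) : 0 ≤ dF D π ε c x y := by
  refine Real.sInf_nonneg ?_
  rintro L ⟨γ, -, -, -, -, rfl⟩
  exact FmetLength_nonneg hc zero_le_one

theorem dF_le_of_segment {L : ℝ} (hc : 0 ≤ c) (hD : segment ℝ x y ⊆ D)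
    (hL : ∫ θ in (0 : ℝ)..1, Fmet D π ε c (x + θ • (y - x)) (y - x) ≤ L) :
    dF D π ε c x y ≤ L := by
  have hderiv (θ : ℝ) : deriv (fun θ : ℝ => x + θ • (y - x)) θ = y - x := by
    simpa using (((hasDerivAt_id θ).smul_const (y - x)).const_add x).deriv
  refine (dF_le_FmetLength_unit hc (isCurveIn_segment hD)).trans ?_
  simpa only [FmetLength, hderiv] using hL

theorem dF_le_of_forall_segment {L : ℝ} (hc : 0 ≤ c) (hD : segment ℝ x y ⊆ D)
    (hL : ∀ z ∈ segment ℝ x y, Fmet D π ε c z (y - x) ≤ L) : dF D π ε c x y ≤ L := by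
  refine dF_le_of_segment hc hD ?_
  have h := intervalIntegral.norm_integral_le_of_norm_le_const (a := 0) (b := 1) (C := L)
    (f := fun θ : ℝ => Fmet D π ε c (x + θ • (y - x)) (y - x)) fun θ hθ => by
      rw [uIoc_of_le zero_le_one] at hθ
      rw [Real.norm_of_nonneg (Fmet_nonneg hc _ _)]
      exact hL _ (segment_eq_image' ℝ x y ▸ mem_image_of_mem _ (Ioc_subset_Icc_self hθ))
  simpa using (le_abs_self _).trans h

theorem dF_le_mul_norm {m : ℝ} (hm : 0 < m) (hc : 0 ≤ c) (hD : segment ℝ x y ⊆ D)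
    (hseg : ∀ z ∈ segment ℝ x y, m ≤ infDist z (frontier D)) :
    dF D π ε c x y ≤ (1 / (2 * m) + 2 / √m + c) * ‖y - x‖ :=
  dF_le_of_forall_segment hc hD fun z hz => Fmet_le_mul_norm hm hc (hseg z hz) _

theorem dF_self (hc : 0 ≤ c) (hx : x ∈ D) : dF D π ε c x x = 0 := by
  have hF (z : Euc d) : Fmet D π ε c z 0 = 0 := by simpa using Fmet_smul z (0 : Euc d) 0
  exact (dF_le_of_forall_segment hc (by simpa using hx) fun z _ => by
    rw [sub_self, hF]).antisymm (dF_nonneg hc)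

namespace FillingData

theorem isCompact_frontier (hF : FillingData D π ε c) : IsCompact (frontier D) :=
  hF.isBounded.isCompact_closure.of_isClosed_subset isClosed_frontier frontier_subset_closure

theorem frontier_nonempty (hF : FillingData D π ε c) : (frontier D).Nonempty := by
  by_contra! h
  have hproj := (hF.proj 0 (by simpa [h] using hF.collar_pos.le)).1
  simp [h] at hproj

theorem infDist_pos (hF : FillingData D π ε c) (hx : x ∈ D) : 0 < infDist x (frontier D) :=
  infDist_frontier_pos hF.isOpen hF.frontier_nonempty hx

theorem continuousOn_proj (hF : FillingData D π ε c) :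
    ContinuousOn π {x | infDist x (frontier D) ≤ ε} :=
  continuousOn_of_unique_nearest hF.isCompact_frontier (fun x hx => (hF.proj x hx).1)
    (fun x hx => (hF.proj x hx).2.1) fun x hx => (hF.proj x hx).2.2

theorem intervalIntegrable_Fmet (hF : FillingData D π ε c) (hab : a ≤ b)
    (hγ : IsCurveIn D γ a b x y) :
    IntervalIntegrable (fun t => Fmet D π ε c (γ t) (deriv γ t)) MeasureTheory.volume a b := by
  obtain ⟨m, hm, hmγ⟩ := hγ.exists_le_infDist hF.isOpen hF.frontier_nonempty hab
  obtain ⟨K, hK⟩ := hγ.piecewiseC1On.exists_lipschitzOnWith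
  have hpair : AEMeasurable (fun t => (γ t, deriv γ t))
      (MeasureTheory.volume.restrict (Ioo a b)) :=
    ((hγ.piecewiseC1On.1.mono Ioo_subset_Icc_self).aemeasurable measurableSet_Ioo).prodMk
      (measurable_deriv γ).aemeasurable
  have hmeas : AEMeasurable (fun t => Fmet D π ε c (γ t) (deriv γ t))
      (MeasureTheory.volume.restrict (Ioo a b)) :=
    (measurable_Fmet hF.continuousOn_proj).comp_aemeasurable (f := fun t => (γ t, deriv γ t)) hpair
  rw [intervalIntegrable_iff_integrableOn_Ioo_of_le hab]
  refine .of_bound (by simp) hmeas.aestronglyMeasurable ((1 / (2 * m) + 2 / √m + c) * K)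
    ((MeasureTheory.ae_restrict_mem measurableSet_Ioo).mono fun t ht => ?_)
  have hc := hF.core_pos
  have hderiv : ‖deriv γ t‖ ≤ K := norm_deriv_le_of_lipschitzOn (Icc_mem_nhds ht.1 ht.2) hK
  rw [Real.norm_of_nonneg (Fmet_nonneg hc.le _ _)]
  refine (Fmet_le_mul_norm hm hc.le (hmγ t (Ioo_subset_Icc_self ht)) _).trans ?_
  gcongr

theorem exists_isCurveIn_append (hF : FillingData D π ε c) (h : IsCurveIn D γ 0 1 x y)
    (h' : IsCurveIn D γ' 0 1 y z) : ∃ g, IsCurveIn D g 0 2 x z ∧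
      FmetLength D π ε c g 0 2 = FmetLength D π ε c γ 0 1 + FmetLength D π ε c γ' 0 1 := by
  set g : ℝ → Euc d := fun t => if t ≤ 1 then γ t else γ' (1 * t + -1)
  have hg : EqOn g γ (Icc 0 1) := fun t ht => if_pos ht.2
  have hg' : EqOn g (fun t => γ' (1 * t + -1)) (Icc 1 2) := fun t ht => by
    rcases eq_or_lt_of_le ht.1 with rfl | hlt
    · simp [g, h.right, h'.left]
    · exact if_neg hlt.not_ge
  have h'' : IsCurveIn D (fun t => γ' (1 * t + -1)) 1 2 y z :=
    .comp_affine one_pos (by norm_num; exact h')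
  have hg₁ := h.congr zero_le_one hg
  have hg₂ := h''.congr one_le_two hg'
  refine ⟨g, hg₁.append hg₂ zero_le_one one_le_two, ?_⟩
  rw [← FmetLength_congr zero_le_one hg, FmetLength,
    ← intervalIntegral.integral_add_adjacent_intervals
      (hF.intervalIntegrable_Fmet zero_le_one hg₁) (hF.intervalIntegrable_Fmet one_le_two hg₂),
    ← FmetLength, ← FmetLength, FmetLength_congr one_le_two hg',
    FmetLength_comp_affine one_ne_zero]
  norm_num

theorem exists_isCurveIn (hF : FillingData D π ε c) (hx : x ∈ D) (hy : y ∈ D) :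
    ∃ γ, IsCurveIn D γ 0 1 x y := by
  refine hF.isConnected.isPreconnected.induction₂ (fun x y => ∃ γ, IsCurveIn D γ 0 1 x y)
    (fun x hx => ?_) (fun x y z _ _ _ ⟨γ, h⟩ ⟨γ', h'⟩ => ?_) (fun x y _ _ ⟨γ, h⟩ => ⟨_, h.reverse⟩)
    hx hy
  · filter_upwards [nhdsWithin_le_nhds (ball_mem_nhds x (hF.infDist_pos hx))] with y hy
    exact ⟨_, isCurveIn_segment (((convex_ball _ _).segment_subset
      (mem_ball_self (hF.infDist_pos hx)) hy).trans (ball_infDist_frontier_subset hx))⟩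
  · obtain ⟨g, hg, -⟩ := hF.exists_isCurveIn_append h h'
    exact ⟨_, IsCurveIn.comp_affine (k := 2) (p := 0) two_pos (by simpa using hg)⟩

theorem dF_triangle (hF : FillingData D π ε c) (hx : x ∈ D) (hy : y ∈ D) (hz : z ∈ D) :
    dF D π ε c x z ≤ dF D π ε c x y + dF D π ε c y z := by
  refine sub_le_iff_le_add'.1 (le_dF (hF.exists_isCurveIn hy hz) fun γ' h' => ?_)
  refine sub_le_comm.1 (le_dF (hF.exists_isCurveIn hx hy) fun γ h => ?_)
  obtain ⟨g, hg, hlen⟩ := hF.exists_isCurveIn_append h h'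
  linarith [dF_le_FmetLength hF.core_pos.le two_pos hg (π := π) (ε := ε)]

theorem dF_comm (hF : FillingData D π ε c) (hx : x ∈ D) (hy : y ∈ D) :
    dF D π ε c x y = dF D π ε c y x := by
  have hle {x y : Euc d} (hx : x ∈ D) (hy : y ∈ D) : dF D π ε c x y ≤ dF D π ε c y x := by
    refine le_dF (hF.exists_isCurveIn hy hx) fun γ h => ?_
    refine (dF_le_FmetLength_unit hF.core_pos.le h.reverse).trans_eq ?_
    exact FmetLength_comp_one_sub
  exact (hle hx hy).antisymm (hle hy hx)

theorem continuousOn_dF (hF : FillingData D π ε c) (hx : x ∈ D) :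
    ContinuousOn (dF D π ε c x) D := by
  intro y hy
  have hδ := hF.infDist_pos hy
  have hc := hF.core_pos.le
  set m := infDist y (frontier D) / 2
  have hlip : ∀ᶠ z in nhdsWithin y D, dist (dF D π ε c x z) (dF D π ε c x y) ≤
      (1 / (2 * m) + 2 / √m + c) * ‖z - y‖ := by
    filter_upwards [self_mem_nhdsWithin,
      nhdsWithin_le_nhds (ball_mem_nhds y (half_pos hδ))] with z hz hzy
    have hball : segment ℝ y z ⊆ ball y m := (convex_ball _ _).segment_subset
      (mem_ball_self (half_pos hδ)) hzy
    refine le_trans ?_ (dF_le_mul_norm (π := π) (ε := ε) (half_pos hδ) hc (hball.trans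
      ((ball_subset_ball (half_le_self hδ.le)).trans (ball_infDist_frontier_subset hy)))
      fun w hw => ?_)
    · rw [Real.dist_eq, abs_le]
      have := hF.dF_triangle hx hz hy
      rw [hF.dF_comm hz hy] at this
      exact ⟨by linarith, by linarith [hF.dF_triangle hx hy hz]⟩
    · have hw := mem_ball'.1 (hball hw)
      have := infDist_le_infDist_add_dist (s := frontier D) (x := y) (y := w)
      linarith [show m + m = _ from add_halves _]
  refine tendsto_iff_dist_tendsto_zero.2 (squeeze_zero' (Eventually.of_forall fun _ =>
    dist_nonneg) hlip ?_)
  have : ContinuousAt (fun z => (1 / (2 * m) + 2 / √m + c) * ‖z - y‖) y := by fun_prop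
  simpa using this.tendsto.mono_left nhdsWithin_le_nhds

theorem exists_forall_dF_le (hF : FillingData D π ε c) {m : ℝ} (hm : 0 < m) :
    ∃ M, ∀ x ∈ D, ∀ y ∈ D, m ≤ infDist x (frontier D) → m ≤ infDist y (frontier D) →
      dF D π ε c x y ≤ M := by
  obtain ⟨o, ho⟩ := hF.isConnected.nonempty
  have hcompact : IsCompact (closure D ∩ {z | m ≤ infDist z (frontier D)}) :=
    hF.isBounded.isCompact_closure.inter_right
      (isClosed_le continuous_const (continuous_infDist_pt _))
  have hsub : closure D ∩ {z | m ≤ infDist z (frontier D)} ⊆ D := fun z ⟨hz, hmz⟩ => by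
    by_contra hzD
    have : z ∈ frontier D := hF.isOpen.frontier_eq ▸ ⟨hz, hzD⟩
    exact (hm.trans_le hmz).ne' (infDist_zero_of_mem this)
  obtain ⟨M, hM⟩ := (hcompact.image_of_continuousOn ((hF.continuousOn_dF ho).mono hsub)).bddAbove
  have hMx {x : Euc d} (hx : x ∈ D) (hmx : m ≤ infDist x (frontier D)) : dF D π ε c o x ≤ M :=
    hM ⟨x, ⟨subset_closure hx, hmx⟩, rfl⟩
  refine ⟨2 * M, fun x hx y hy hmx hmy => ?_⟩
  have := hF.dF_triangle hx ho hy
  rw [hF.dF_comm hx ho] at this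
  linarith [hMx hx hmx, hMx hy hmy]

end FillingData

end IntrinsicDistance

/-! ### The lower bound -/

/-- The function `h = δ_D^{1/2}`, truncated outside the collar so that it is bounded by `√ε`. -/
def height {d : ℕ} (D : Set (Euc d)) (ε : ℝ) (x : Euc d) : ℝ :=
  √(min (infDist x (frontier D)) ε)

/-- The quantity `q` for which `d_F(x, y) = 2 log q(x, y) - log h(x) - log h(y) + O(1)`. It plays
the role of `H(π x, π y) + h(x) ∨ h(y)` in the hyperbolic filling distance `dH`. -/
def quasiDist {d : ℕ} (D : Set (Euc d)) (ε : ℝ) (x y : Euc d) : ℝ :=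
  dist x y + max (height D ε x) (height D ε y)

/-- The argument of the main logarithm in the potential `pot`: for fixed `x₀` it is comparable to
`quasiDist x₀`, and its quadratic term compensates for the normal part of the speed. -/
def potQ (A h₀ ρ h : ℝ) : ℝ := ρ / A + h₀ + h - 2 / A * h ^ 2

/-- For `h₀ = h(x₀)` and a large constant `A`, the potential `pot A h₀ |x₀ - x| (h x)` is a
`1`-Lipschitz function of `x` for `d_F`. -/
def pot (A h₀ ρ h : ℝ) : ℝ := 2 * Real.log (potQ A h₀ ρ h) - Real.log h

section Potential

variable {A h₀ ρ h τ : ℝ}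

theorem two_thirds_mul_le_sub (hA : 0 < A) (hh : 0 ≤ h) (hhA : 6 * h ≤ A) :
    2 / 3 * h ≤ h - 2 / A * h ^ 2 := by
  have : 2 / A * h ≤ 1 / 3 := by rw [div_mul_eq_mul_div, div_le_iff₀ hA]; linarith
  nlinarith

theorem two_thirds_mul_le_potQ (hA : 0 < A) (hh₀ : 0 ≤ h₀) (hρ : 0 ≤ ρ) (hh : 0 ≤ h)
    (hhA : 6 * h ≤ A) : 2 / 3 * h ≤ potQ A h₀ ρ h := by
  have := two_thirds_mul_le_sub hA hh hhA
  have : 0 ≤ ρ / A := by positivity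
  rw [potQ]
  linarith

theorem pot_deriv_le {Q b ρ' : ℝ} (hA : 6 ≤ A) (hh : 0 < h) (hhA : 6 * h ≤ A)
    (hQ : h - 2 / A * h ^ 2 ≤ Q) (hb : 0 ≤ b) (hρ : |ρ'| ≤ 2 * h * |τ| + b) :
    2 * ((ρ' / A + τ - 4 / A * h * τ) / Q) - τ / h ≤ (|τ| + b) / h := by
  have hA₀ : 0 < A := by linarith
  have hhQ := (two_thirds_mul_le_sub hA₀ hh.le hhA).trans hQ
  have hAh : 2 / A * h ≤ 2 / 3 * h := by
    gcongr 2 / ?_ * h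
    linarith
  have hAh' : 12 / A * h ≤ 2 := by rw [div_mul_eq_mul_div, div_le_iff₀ hA₀]; linarith
  have hρ' : 2 / A * h * ρ' ≤ 2 / A * h * (2 * h * |τ| + b) := by
    gcongr
    exact (le_abs_self _).trans hρ
  have hb' : 2 / A * h * b ≤ b * Q := by nlinarith
  -- The quadratic term of `potQ` absorbs the contribution of the normal velocity to `ρ'`.
  have hτ : 2 / A * h * (2 * h * |τ|) + 2 * h * (τ - 4 / A * h * τ) ≤ (τ + |τ|) * Q := by
    rcases le_total 0 τ with hτ | hτ
    · rw [abs_of_nonneg hτ]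
      calc _ = (τ + τ) * (h - 2 / A * h ^ 2) := by ring
        _ ≤ _ := by gcongr
    · rw [abs_of_nonpos hτ]
      calc _ = h * -τ * (12 / A * h - 2) := by ring
        _ ≤ 0 := mul_nonpos_of_nonneg_of_nonpos (mul_nonneg hh.le (neg_nonneg.2 hτ)) (by linarith)
        _ = _ := by ring
  rw [← mul_div_assoc, sub_le_iff_le_add, ← add_div, div_le_div_iff₀ (by linarith) hh]
  calc 2 * (ρ' / A + τ - 4 / A * h * τ) * h
      = 2 / A * h * ρ' + 2 * h * (τ - 4 / A * h * τ) := by ring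
    _ ≤ (|τ| + b + τ) * Q := by linarith

theorem hasDerivAt_pot {ρ h : ℝ → ℝ} {ρ' t : ℝ} (hρ : HasDerivAt ρ ρ' t) (hh : HasDerivAt h τ t)
    (hQ : potQ A h₀ (ρ t) (h t) ≠ 0) (ht : h t ≠ 0) :
    HasDerivAt (fun s => pot A h₀ (ρ s) (h s))
      (2 * ((ρ' / A + τ - 4 / A * h t * τ) / potQ A h₀ (ρ t) (h t)) - τ / h t) t := by
  have hQ' : HasDerivAt (fun s => potQ A h₀ (ρ s) (h s)) (ρ' / A + τ - 4 / A * h t * τ) t := by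
    convert! (((hρ.div_const A).add_const h₀).add hh).sub ((hh.pow 2).const_mul (2 / A)) using 1
    ring
  exact ((hQ'.log hQ).const_mul 2).sub (hh.log ht)

theorem exists_lipschitzOnWith_pot {R m M : ℝ} (hA : 0 < A) (hh₀ : 0 ≤ h₀) (hm : 0 < m)
    (hM : 6 * M ≤ A) :
    ∃ K, LipschitzOnWith K (fun p : ℝ × ℝ => pot A h₀ p.1 p.2) (Icc 0 R ×ˢ Icc m M) := by
  refine ContDiffOn.exists_lipschitzOnWith (n := 1) (fun p hp => ?_) one_ne_zero
    ((convex_Icc _ _).prod (convex_Icc _ _)) (isCompact_Icc.prod isCompact_Icc)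
  have hp₂ : 0 < p.2 := hm.trans_le hp.2.1
  have hQ : 2 / 3 * p.2 ≤ potQ A h₀ p.1 p.2 :=
    two_thirds_mul_le_potQ hA hh₀ hp.1.1 hp₂.le (by linarith [hp.2.2])
  have hQ' : ContDiffAt ℝ 1 (fun p : ℝ × ℝ => potQ A h₀ p.1 p.2) p := by
    unfold potQ
    fun_prop
  exact ((contDiffAt_const.mul (hQ'.log (by linarith))).sub
    (contDiffAt_snd.log hp₂.ne')).contDiffWithinAt

theorem pot_zero_le (hA : 0 < A) (hh : 0 < h) (hhA : 6 * h ≤ A) :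
    pot A h 0 h ≤ 2 * Real.log 2 + Real.log h := by
  have hpos : 2 / 3 * h ≤ potQ A h 0 h := two_thirds_mul_le_potQ hA hh.le le_rfl hh.le hhA
  have hQ : potQ A h 0 h ≤ 2 * h := by
    have : 0 ≤ 2 / A * h ^ 2 := by positivity
    rw [potQ, zero_div]
    linarith
  have hlog := Real.log_le_log (by linarith) hQ
  rw [Real.log_mul two_ne_zero hh.ne'] at hlog
  rw [pot]
  linarith

theorem le_pot (hA : 6 ≤ A) (hh₀ : 0 ≤ h₀) (hρ : 0 ≤ ρ) (hh : 0 < h) (hhA : 6 * h ≤ A) :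
    2 * (Real.log (ρ + max h₀ h) - Real.log A) - Real.log h ≤ pot A h₀ ρ h := by
  have hA₀ : 0 < A := by linarith
  have hpos : 0 < ρ + max h₀ h := add_pos_of_nonneg_of_pos hρ (lt_max_of_lt_right hh)
  have hmax : max h₀ h / A ≤ h₀ + 2 / 3 * h := by
    rw [div_le_iff₀ hA₀]
    refine max_le ?_ ?_ <;> nlinarith
  have hQ : (ρ + max h₀ h) / A ≤ potQ A h₀ ρ h := by
    rw [potQ, add_div]
    linarith [two_thirds_mul_le_sub hA₀ hh.le hhA]
  have hlog := Real.log_le_log (by positivity) hQ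
  rw [Real.log_div hpos.ne' hA₀.ne'] at hlog
  rw [pot]
  linarith

end Potential

section Height

variable {d : ℕ} {D : Set (Euc d)} {π : Euc d → Euc d} {ε c : ℝ} {x y z : Euc d}

theorem height_nonneg : 0 ≤ height D ε x := Real.sqrt_nonneg _

theorem height_le : height D ε x ≤ √ε := Real.sqrt_le_sqrt (min_le_right _ _)

theorem sq_height (hε : 0 ≤ ε) : height D ε x ^ 2 = min (infDist x (frontier D)) ε :=
  Real.sq_sqrt (le_min infDist_nonneg hε)

theorem height_of_infDist_le (h : infDist x (frontier D) ≤ ε) :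
    height D ε x = √(infDist x (frontier D)) := by
  rw [height, min_eq_left h]

theorem height_of_le_infDist (h : ε ≤ infDist x (frontier D)) : height D ε x = √ε := by
  rw [height, min_eq_right h]

theorem exists_lipschitzOnWith_height {m : ℝ} (hm : 0 < m) (hε : 0 < ε) :
    ∃ K, LipschitzOnWith K (height D ε) {x | m ≤ infDist x (frontier D)} := by
  have hsqrt : ContDiffOn ℝ 1 Real.sqrt (Icc (min m ε) ε) := fun e he =>
    (Real.contDiffAt_sqrt ((lt_min hm hε).trans_le he.1).ne').contDiffWithinAt
  obtain ⟨K, hK⟩ := hsqrt.exists_lipschitzOnWith one_ne_zero (convex_Icc _ _) isCompact_Icc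
  exact ⟨K * 1, hK.comp (((lipschitz_infDist_pt _).min_const ε).lipschitzOnWith)
    fun x hx => ⟨min_le_min_right ε hx, min_le_right _ _⟩⟩

theorem quasiDist_nonneg : 0 ≤ quasiDist D ε x y :=
  add_nonneg dist_nonneg (le_max_of_le_left height_nonneg)

theorem quasiDist_comm : quasiDist D ε x y = quasiDist D ε y x := by
  rw [quasiDist, quasiDist, dist_comm, max_comm]

theorem quasiDist_triangle : quasiDist D ε x z ≤ quasiDist D ε x y + quasiDist D ε y z := by
  have hx := le_max_left (height D ε x) (height D ε y)
  have hz := le_max_right (height D ε y) (height D ε z)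
  have hxy : 0 ≤ max (height D ε x) (height D ε y) := le_max_of_le_left height_nonneg
  have hyz : 0 ≤ max (height D ε y) (height D ε z) := le_max_of_le_left height_nonneg
  have hmax := max_le (hx.trans (le_add_of_nonneg_right hyz)) (hz.trans (le_add_of_nonneg_left hxy))
  simp only [quasiDist]
  linarith [dist_triangle x y z]

end Height

namespace FillingData

variable {d : ℕ} {D : Set (Euc d)} {π : Euc d → Euc d} {ε c : ℝ} {x y : Euc d} {γ : ℝ → Euc d}
  {t τ : ℝ} {v : Euc d}

theorem height_pos (hF : FillingData D π ε c) (hx : x ∈ D) : 0 < height D ε x :=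
  Real.sqrt_pos.2 (lt_min (hF.infDist_pos hx) hF.collar_pos)

theorem quasiDist_pos (hF : FillingData D π ε c) (hx : x ∈ D) : 0 < quasiDist D ε x y :=
  add_pos_of_nonneg_of_pos dist_nonneg (lt_max_of_lt_left (hF.height_pos hx))

theorem proj_ne (hF : FillingData D π ε c) (hx : x ∈ D) (hxε : infDist x (frontier D) ≤ ε) :
    π x ≠ x := fun h =>
  (hF.infDist_pos hx).ne' (infDist_zero_of_mem (h ▸ (hF.proj x hxε).1))

theorem abs_deriv_height (hF : FillingData D π ε c) (hD : γ t ∈ D)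
    (hlt : infDist (γ t) (frontier D) < ε) (hγ : HasDerivAt γ v t)
    (hτ : HasDerivAt (fun s => height D ε (γ s)) τ t) :
    2 * height D ε (γ t) * |τ| = ‖vN (γ t) (π (γ t)) v‖ := by
  obtain ⟨hξ, hdist, -⟩ := hF.proj (γ t) hlt.le
  have hne := hF.proj_ne hD hlt.le
  set ξ := π (γ t)
  have hnorm : 0 < ‖γ t - ξ‖ := norm_sub_pos_iff.2 hne.symm
  have hnormDeriv : HasDerivAt (fun s => ‖γ s - ξ‖) (⟪γ t - ξ, v⟫ / ‖γ t - ξ‖) t := by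
    convert! ((hγ.sub_const ξ).norm_sq).sqrt (by positivity) using 1
    · simp only [Real.sqrt_sq (norm_nonneg _)]
    · rw [Real.sqrt_sq hnorm.le]
      field_simp
  -- `‖γ - ξ‖` dominates the truncated distance, with equality at `t`.
  have hmin : IsLocalMin (fun s => ‖γ s - ξ‖ - height D ε (γ s) ^ 2) t := by
    refine Eventually.of_forall fun s => ?_
    have hs : min (infDist (γ s) (frontier D)) ε ≤ dist (γ s) ξ :=
      (min_le_left _ _).trans (infDist_le_dist_of_mem hξ)
    simp only [sq_height hF.collar_pos.le, ← dist_eq_norm, min_eq_left hlt.le, hdist, sub_self]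
    linarith
  have hzero := hmin.hasDerivAt_eq_zero (hnormDeriv.sub (hτ.pow 2))
  rw [norm_vN hne, nvec, real_inner_smul_right, ← neg_sub (γ t) ξ, inner_neg_right, norm_neg,
    mul_neg, abs_neg, real_inner_comm, ← div_eq_inv_mul, sub_eq_zero.1 hzero, abs_mul]
  simp [abs_of_nonneg height_nonneg]

theorem deriv_height_eq_zero (hge : ε ≤ infDist (γ t) (frontier D))
    (hτ : HasDerivAt (fun s => height D ε (γ s)) τ t) : τ = 0 := by
  have hmax : IsLocalMax (fun s => height D ε (γ s)) t := Eventually.of_forall fun s => by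
    simp only [height_of_le_infDist hge, height_le]
  exact hmax.hasDerivAt_eq_zero hτ

theorem three_div_mul_norm_le_Fmet {A : ℝ} (hF : FillingData D π ε c) (hA : 6 ≤ A)
    (hAε : 6 * √ε ≤ A) (hAc : 3 ≤ A * c * √ε) (hx : ε ≤ infDist x (frontier D)) (v : Euc d) :
    3 / (A * √ε) * ‖v‖ ≤ Fmet D π ε c x v := by
  have hε := Real.sqrt_pos.2 hF.collar_pos
  refine mul_norm_le_Fmet (by positivity) ?_ ?_ ?_ hx v
  · rw [div_le_div_iff₀ (by positivity) (by linarith [hF.collar_pos])]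
    nlinarith [Real.mul_self_sqrt hF.collar_pos.le]
  · rw [div_le_div_iff₀ (by positivity) hε]
    nlinarith
  · rw [div_le_iff₀ (by positivity)]
    linarith

theorem deriv_pot_le_Fmet {A h₀ ρ' : ℝ} {z : Euc d} (hF : FillingData D π ε c) (hA : 6 ≤ A)
    (hAε : 6 * √ε ≤ A) (hAc : 3 ≤ A * c * √ε) (hh₀ : 0 ≤ h₀) (hD : γ t ∈ D)
    (hγ : HasDerivAt γ v t) (hρ : HasDerivAt (fun s => dist z (γ s)) ρ' t)
    (hτ : HasDerivAt (fun s => height D ε (γ s)) τ t) :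
    deriv (fun s => pot A h₀ (dist z (γ s)) (height D ε (γ s))) t ≤ Fmet D π ε c (γ t) v := by
  have hA₀ : 0 < A := by linarith
  have hε : 0 < √ε := Real.sqrt_pos.2 hF.collar_pos
  have hh : 0 < height D ε (γ t) := hF.height_pos hD
  have hhA : 6 * height D ε (γ t) ≤ A := by linarith [height_le (D := D) (ε := ε) (x := γ t)]
  have hQ : 2 / 3 * height D ε (γ t) ≤ potQ A h₀ (dist z (γ t)) (height D ε (γ t)) :=
    two_thirds_mul_le_potQ hA₀ hh₀ dist_nonneg hh.le hhA
  have hρ' : |ρ'| ≤ ‖v‖ := abs_deriv_dist_le hγ hρ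
  rw [(hasDerivAt_pot hρ hτ (by linarith) hh.ne').deriv]
  rcases lt_or_ge (infDist (γ t) (frontier D)) ε with hlt | hge
  · have hN := hF.abs_deriv_height hD hlt hγ hτ
    have hsq : height D ε (γ t) ^ 2 = infDist (γ t) (frontier D) := by
      rw [sq_height hF.collar_pos.le, min_eq_left hlt.le]
    refine (pot_deriv_le hA hh hhA ?_ (norm_nonneg (vT (γ t) (π (γ t)) v)) ?_).trans_eq ?_
    · have : 0 ≤ dist z (γ t) / A := by positivity
      rw [potQ]
      linarith
    · rw [hN]
      exact hρ'.trans (norm_le_norm_vN_add_norm_vT _ _ _)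
    · rw [Fmet, if_pos hlt.le, ← hN, ← height_of_infDist_le hlt.le, ← hsq]
      field_simp
  · rw [deriv_height_eq_zero hge hτ]
    rw [height_of_le_infDist hge] at hQ ⊢
    calc _ = 2 * (ρ' / A) / potQ A h₀ (dist z (γ t)) √ε := by ring
      _ ≤ 2 * (‖v‖ / A) / (2 / 3 * √ε) := by
        gcongr
        exact (le_abs_self _).trans hρ'
      _ = 3 / (A * √ε) * ‖v‖ := by field_simp
      _ ≤ _ := hF.three_div_mul_norm_le_Fmet hA hAε hAc hge v

theorem exists_lipschitzOnWith_pot_comp {A h₀ a b : ℝ} (hF : FillingData D π ε c) (hA : 0 < A)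
    (hAε : 6 * √ε ≤ A) (hh₀ : 0 ≤ h₀) (hab : a ≤ b) (hγ : IsCurveIn D γ a b x y) (z : Euc d) :
    ∃ K Kρ Kh, LipschitzOnWith Kρ (fun s => dist z (γ s)) (Icc a b) ∧
      LipschitzOnWith Kh (fun s => height D ε (γ s)) (Icc a b) ∧
      LipschitzOnWith K (fun s => pot A h₀ (dist z (γ s)) (height D ε (γ s))) (Icc a b) := by
  obtain ⟨m, hm, hmγ⟩ := hγ.exists_le_infDist hF.isOpen hF.frontier_nonempty hab
  obtain ⟨Kγ, hKγ⟩ := hγ.piecewiseC1On.exists_lipschitzOnWith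
  obtain ⟨K', hK'⟩ := exists_lipschitzOnWith_height (D := D) hm hF.collar_pos
  have hρ : LipschitzOnWith (1 * Kγ) (fun s => dist z (γ s)) (Icc a b) :=
    (LipschitzWith.dist_right z).comp_lipschitzOnWith hKγ
  have hh : LipschitzOnWith (K' * Kγ) (fun s => height D ε (γ s)) (Icc a b) := hK'.comp hKγ hmγ
  obtain ⟨R, hR⟩ := (isCompact_Icc.image_of_continuousOn hρ.continuousOn).bddAbove
  obtain ⟨Kp, hKp⟩ := exists_lipschitzOnWith_pot (R := R) hA hh₀
    (Real.sqrt_pos.2 (lt_min hm hF.collar_pos)) hAε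
  refine ⟨_, _, _, hρ, hh, hKp.comp (f := fun s => (dist z (γ s), height D ε (γ s)))
    (hρ.prodMk hh) fun s hs => ?_⟩
  exact ⟨⟨dist_nonneg, hR (mem_image_of_mem _ hs)⟩,
    Real.sqrt_le_sqrt (min_le_min_right ε (hmγ s hs)), height_le⟩

theorem pot_sub_pot_le_FmetLength {A h₀ a b : ℝ} (hF : FillingData D π ε c) (hA : 6 ≤ A)
    (hAε : 6 * √ε ≤ A) (hAc : 3 ≤ A * c * √ε) (hh₀ : 0 ≤ h₀) (hab : a ≤ b)
    (hγ : IsCurveIn D γ a b x y) (z : Euc d) :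
    pot A h₀ (dist z y) (height D ε y) - pot A h₀ (dist z x) (height D ε x) ≤
      FmetLength D π ε c γ a b := by
  obtain ⟨Kγ, hKγ⟩ := hγ.piecewiseC1On.exists_lipschitzOnWith
  obtain ⟨K, Kρ, Kh, hKρ, hKh, hK⟩ :=
    hF.exists_lipschitzOnWith_pot_comp (by linarith) hAε hh₀ hab hγ z
  have hpot := sub_le_integral_of_deriv_le hab hK (hF.intervalIntegrable_Fmet hab hγ) <| by
    filter_upwards [ae_differentiableAt_of_lipschitzOnWith_Icc hKγ,
      ae_differentiableAt_of_lipschitzOnWith_Icc hKρ,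
      ae_differentiableAt_of_lipschitzOnWith_Icc hKh] with t hγt hρt hht ht
    exact hF.deriv_pot_le_Fmet hA hAε hAc hh₀ (hγ.mapsTo (Ioo_subset_Icc_self ht))
      (hγt ht).hasDerivAt (hρt ht).hasDerivAt (hht ht).hasDerivAt
  rwa [hγ.left, hγ.right] at hpot

theorem two_mul_log_quasiDist_sub_le_dF {A : ℝ} (hF : FillingData D π ε c) (hA : 6 ≤ A)
    (hAε : 6 * √ε ≤ A) (hAc : 3 ≤ A * c * √ε) (hx : x ∈ D) (hy : y ∈ D) :
    2 * Real.log (quasiDist D ε x y) - Real.log (height D ε x) - Real.log (height D ε y) -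
      2 * Real.log (2 * A) ≤ dF D π ε c x y := by
  have hA₀ : 0 < A := by linarith
  have hhx := hF.height_pos hx
  have hA' (z : Euc d) : 6 * height D ε z ≤ A := by
    linarith [height_le (D := D) (ε := ε) (x := z)]
  have hpotx := pot_zero_le hA₀ hhx (hA' x)
  have hpoty := le_pot hA hhx.le (dist_nonneg (x := x) (y := y)) (hF.height_pos hy) (hA' y)
  have hdF : pot A (height D ε x) (dist x y) (height D ε y) -
      pot A (height D ε x) (dist x x) (height D ε x) ≤ dF D π ε c x y :=
    le_dF (hF.exists_isCurveIn hx hy) fun γ hγ =>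
      hF.pot_sub_pot_le_FmetLength hA hAε hAc hhx.le zero_le_one hγ x
  rw [dist_self] at hdF
  rw [Real.log_mul two_ne_zero hA₀.ne', quasiDist]
  linarith

theorem exists_two_mul_log_quasiDist_sub_le_dF (hF : FillingData D π ε c) :
    ∃ C, ∀ x ∈ D, ∀ y ∈ D, 2 * Real.log (quasiDist D ε x y) - Real.log (height D ε x) -
      Real.log (height D ε y) - C ≤ dF D π ε c x y := by
  have hε : 0 < √ε := Real.sqrt_pos.2 hF.collar_pos
  have hc := hF.core_pos
  have hcε : 0 < 3 / (c * √ε) := by positivity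
  refine ⟨_, fun x hx y hy => hF.two_mul_log_quasiDist_sub_le_dF
    (A := 6 + 6 * √ε + 3 / (c * √ε)) (by linarith) (by linarith) ?_ hx hy⟩
  calc 3 = 3 / (c * √ε) * c * √ε := by field_simp
    _ ≤ _ := by
      gcongr
      linarith

end FillingData

/-! ### Tangent balls -/

section TangentBalls

variable {E : Type*} [NormedAddCommGroup E]

/-- The balls of radius `r` tangent to `∂D` at `ξ` and centred at `ξ - r • n`, `ξ + r • n` lie in
`D` and in its complement respectively; when `ξ ∈ ∂D` this makes `n` the outer unit normal. -/
structure TangentBalls [InnerProductSpace ℝ E] (D : Set E) (r : ℝ) (ξ n : E) : Prop where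
  pos : 0 < r
  norm_eq : ‖n‖ = 1
  inner_subset : ball (ξ - r • n) r ⊆ D
  disjoint_outer : Disjoint (ball (ξ + r • n) r) D

/-- The two-sided ball condition with uniform radius `r`. -/
def HasTangentBalls [InnerProductSpace ℝ E] (D : Set E) (r : ℝ) : Prop :=
  ∀ ξ ∈ frontier D, ∃ n, TangentBalls D r ξ n

theorem abs_sub_sub_fderiv_le [NormedSpace ℝ E] {u : E → ℝ} {s : Set E} {K : NNReal}
    (hs : Convex ℝ s) (hu : ∀ z ∈ s, DifferentiableAt ℝ u z) (hK : LipschitzOnWith K (fderiv ℝ u) s)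
    {x y : E} (hx : x ∈ s) (hy : y ∈ s) :
    |u y - u x - fderiv ℝ u x (y - x)| ≤ K * ‖y - x‖ ^ 2 := by
  have hseg : segment ℝ x y ⊆ s := hs.segment_subset hx hy
  have h := (convex_segment x y).norm_image_sub_le_of_norm_hasFDerivWithin_le' (𝕜 := ℝ)
    (φ := fderiv ℝ u x) (C := K * ‖y - x‖)
    (fun z hz => (hu z (hseg hz)).hasFDerivAt.hasFDerivWithinAt)
    (fun z hz => (hK.norm_sub_le (hseg hz) hx).trans ?_)
    (left_mem_segment ℝ x y) (right_mem_segment ℝ x y)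
  · rwa [Real.norm_eq_abs, mul_assoc, ← pow_two] at h
  · gcongr
    rw [← dist_eq_norm, ← dist_eq_norm, dist_comm z, dist_comm y]
    linarith [dist_add_dist_of_mem_segment hz, dist_nonneg (x := z) (y := y)]

variable [InnerProductSpace ℝ E] {D : Set E} {r : ℝ} {y ξ n : E}

theorem mem_ball_add_smul_iff (hr : 0 < r) (hn : ‖n‖ = 1) :
    y ∈ ball (ξ + r • n) r ↔ ‖y - ξ‖ ^ 2 < 2 * r * ⟪y - ξ, n⟫ := by
  rw [mem_ball, dist_eq_norm, ← sub_sub, ← sq_lt_sq₀ (norm_nonneg _) hr.le, norm_sub_sq_real,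
    real_inner_smul_right, norm_smul, hn, Real.norm_of_nonneg hr.le]
  constructor <;> intro h <;> linarith

theorem exists_unit_eq_norm_mul_inner [CompleteSpace E] {f : E →L[ℝ] ℝ} (hf : f ≠ 0) :
    ∃ n, ‖n‖ = 1 ∧ ∀ v, f v = ‖f‖ * ⟪v, n⟫ := by
  obtain ⟨g, rfl⟩ := (InnerProductSpace.toDual ℝ E).surjective f
  have hg : g ≠ 0 := fun h => hf (by simp [h])
  refine ⟨‖g‖⁻¹ • g, by rw [norm_smul, norm_inv, norm_norm, inv_mul_cancel₀ (by simpa)],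
    fun v => ?_⟩
  rw [LinearIsometryEquiv.norm_map, real_inner_smul_right, mul_inv_cancel_left₀ (by simpa),
    InnerProductSpace.toDual_apply_apply, real_inner_comm]

theorem ball_add_smul_subset_ball (hn : ‖n‖ = 1) :
    ball (ξ + r • n) r ⊆ ball ξ (2 * r) := by
  rcases lt_or_ge r 0 with hr | hr
  · simp [ball_eq_empty.2 hr.le]
  refine ball_subset_ball' (le_of_eq ?_)
  rw [dist_self_add_left, norm_smul, hn, Real.norm_of_nonneg hr]
  ring

theorem TangentBalls.of_abs_sub_mul_inner_le {u : E → ℝ} {k K : ℝ} (hr : 0 < r) (hn : ‖n‖ = 1)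
    (hD : ∀ y ∈ ball ξ (2 * r), y ∈ D ↔ u y < 0)
    (hu : ∀ y ∈ ball ξ (2 * r), |u y - k * ⟪y - ξ, n⟫| ≤ K * ‖y - ξ‖ ^ 2)
    (hK : 0 ≤ K) (hk : 2 * r * K < k) : TangentBalls D r ξ n := by
  have hlt {y : E} {a : ℝ} (h : ‖y - ξ‖ ^ 2 < 2 * r * a) : K * ‖y - ξ‖ ^ 2 < k * a := by
    have ha : 0 < a := by
      by_contra!
      nlinarith [sq_nonneg ‖y - ξ‖]
    nlinarith
  have hn' : ‖-n‖ = 1 := by rwa [norm_neg]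
  refine ⟨hr, hn, fun y hy => ?_, disjoint_left.2 fun y hy hyD => ?_⟩
  · rw [sub_eq_add_neg, ← smul_neg] at hy
    have hyB := ball_add_smul_subset_ball hn' hy
    rw [mem_ball_add_smul_iff hr hn', inner_neg_right] at hy
    refine (hD y hyB).2 ?_
    linarith [(abs_le.1 (hu y hyB)).2, hlt hy]
  · have hyB := ball_add_smul_subset_ball hn hy
    rw [mem_ball_add_smul_iff hr hn] at hy
    linarith [(abs_le.1 (hu y hyB)).1, hlt hy, (hD y hyB).1 hyD]

theorem eventually_exists_tangentBalls [CompleteSpace E] {u : E → ℝ} (hu : ContDiffAt ℝ 2 u ξ)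
    (hD : ∀ᶠ y in nhds ξ, y ∈ D ↔ u y < 0) (hne : fderiv ℝ u ξ ≠ 0) :
    ∀ᶠ z : ℝ × E in nhds (0, ξ), 0 < z.1 → u z.2 = 0 → ∃ n, TangentBalls D z.1 z.2 n := by
  have hdu : ContDiffAt ℝ 1 (fderiv ℝ u) ξ := hu.fderiv_right (by norm_num)
  obtain ⟨K, s, hs, hK⟩ := hdu.exists_lipschitzOnWith
  obtain ⟨m, hm₀, hm⟩ := exists_between (norm_pos_iff.2 hne)
  have hdiff : ∀ᶠ y in nhds ξ, DifferentiableAt ℝ u y :=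
    (hu.eventually (by simp)).mono fun y hy => hy.differentiableAt (by norm_num)
  obtain ⟨ρ, hρ, hball⟩ := Metric.eventually_nhds_iff_ball.1
    (((eventually_mem_set.2 hs).and hdiff).and
      (hD.and (hdu.continuousAt.norm.eventually (lt_mem_nhds hm))))
  have hr₁ : ∀ᶠ r : ℝ in nhds 0, 2 * r < ρ / 2 :=
    (continuous_const_mul 2).continuousAt.eventually_lt_const (by simpa)
  have hr₂ : ∀ᶠ r : ℝ in nhds 0, 2 * r * K < m :=
    ((continuous_const_mul 2).mul_const (K : ℝ)).continuousAt.eventually_lt_const (by simpa)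
  rw [nhds_prod_eq]
  filter_upwards [(hr₁.and hr₂).prod_mk (ball_mem_nhds ξ (half_pos hρ))]
    with ⟨r, η⟩ ⟨⟨hrρ, hrm⟩, hη⟩ hr hη₀
  have hsub : ball η (2 * r) ⊆ ball ξ ρ := ball_subset_ball' (by linarith [mem_ball.1 hη])
  have hηρ : η ∈ ball ξ ρ := hsub (mem_ball_self (by positivity))
  have hgrad : m < ‖fderiv ℝ u η‖ := (hball η hηρ).2.2
  obtain ⟨n, hn, hinner⟩ := exists_unit_eq_norm_mul_inner
    (norm_pos_iff.1 (hm₀.trans hgrad))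
  refine ⟨n, .of_abs_sub_mul_inner_le hr hn (fun y hy => (hball y (hsub hy)).2.1) (fun y hy => ?_)
    K.2 (hrm.trans hgrad)⟩
  have htaylor := abs_sub_sub_fderiv_le (convex_ball ξ ρ) (fun z hz => (hball z hz).1.2)
    (hK.mono fun z hz => (hball z hz).1.1) hηρ (hsub hy)
  rwa [hη₀, sub_zero, hinner] at htaylor

end TangentBalls

theorem IsC2BoundedDomain.eventually_hasTangentBalls {d : ℕ} {D : Set (Euc d)}
    (hD : IsC2BoundedDomain D) :
    ∀ᶠ r in nhdsWithin 0 (Ioi 0), HasTangentBalls D r := by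
  obtain ⟨-, -, hb, U, u, hU, hfU, hu, hDU, hf, hne⟩ := hD
  have hcompact : IsCompact (frontier D) :=
    hb.isCompact_closure.of_isClosed_subset isClosed_frontier frontier_subset_closure
  have hunif : ∀ᶠ r : ℝ in nhds 0, ∀ ξ ∈ frontier D,
      0 < r → ξ ∈ frontier D → ∃ n, TangentBalls D r ξ n := by
    refine hcompact.eventually_forall_of_forall_eventually fun ξ hξ => ?_
    have hUξ : U ∈ nhds ξ := hU.mem_nhds (hfU hξ)
    have hDu : ∀ᶠ y in nhds ξ, y ∈ D ↔ u y < 0 := by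
      filter_upwards [hUξ] with y hy
      simpa [hy] using Set.ext_iff.1 hDU y
    filter_upwards [eventually_exists_tangentBalls (hu.contDiffAt hUξ) hDu (hne ξ hξ)]
      with z hz hr hzf
    exact hz hr (hf.subset hzf).2
  filter_upwards [hunif.filter_mono nhdsWithin_le_nhds, self_mem_nhdsWithin] with r hr hr₀ ξ hξ
  exact hr ξ hξ hr₀ hξ

namespace TangentBalls

variable {E : Type*} [NormedAddCommGroup E] [InnerProductSpace ℝ E] {D : Set E} {r t : ℝ}
  {x y ξ η n n' : E}

theorem infDist_add_le_dist (h : TangentBalls D r ξ n) (hx : x ∈ D) :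
    infDist x (frontier D) + r ≤ dist x (ξ + r • n) := by
  rcases infDist_nonneg (x := x) (s := frontier D) |>.eq_or_lt with h0 | h0
  · rw [← h0, zero_add]
    exact not_lt.1 fun hlt => disjoint_left.1 h.disjoint_outer hlt hx
  · rw [← disjoint_ball_ball_iff h0 h.pos]
    exact h.disjoint_outer.symm.mono_left (ball_infDist_frontier_subset hx)

theorem eq_sub_infDist_smul (h : TangentBalls D r ξ n) (hx : x ∈ D)
    (hξ : dist x ξ = infDist x (frontier D)) : x = ξ - infDist x (frontier D) • n := by
  have hdist := h.infDist_add_le_dist hx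
  have hδ : 0 ≤ infDist x (frontier D) := infDist_nonneg
  have hr := h.pos
  set δ := infDist x (frontier D)
  rw [dist_eq_norm] at hξ hdist
  have hsq := pow_le_pow_left₀ (by positivity) hdist 2
  rw [← sub_sub, norm_sub_sq_real, real_inner_smul_right, norm_smul, h.norm_eq,
    Real.norm_of_nonneg hr.le, hξ] at hsq
  have hinner : ⟪x - ξ, n⟫ ≤ -δ := by nlinarith
  have hzero : ‖x - ξ + δ • n‖ ^ 2 ≤ 0 := by
    rw [norm_add_sq_real, real_inner_smul_right, norm_smul, h.norm_eq, Real.norm_of_nonneg hδ, hξ]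
    nlinarith [hinner]
  rwa [sq_nonpos_iff, norm_eq_zero, sub_add, sub_eq_zero] at hzero

theorem ball_sub_smul_subset (h : TangentBalls D r ξ n) (ht : t ≤ r) :
    ball (ξ - t • n) t ⊆ D := by
  refine (ball_subset_ball' ?_).trans h.inner_subset
  rw [dist_eq_norm, sub_sub_sub_cancel_left, ← sub_smul, norm_smul, h.norm_eq,
    Real.norm_of_nonneg (sub_nonneg.2 ht)]
  linarith

theorem dist_sub_smul (h : TangentBalls D r ξ n) (ht : 0 ≤ t) : dist (ξ - t • n) ξ = t := by
  rw [dist_self_sub_left, norm_smul, h.norm_eq, Real.norm_of_nonneg ht, mul_one]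

theorem infDist_sub_smul (h : TangentBalls D r ξ n) (hD : IsOpen D) (hξ : ξ ∈ frontier D)
    (ht : 0 ≤ t) (htr : t ≤ r) : infDist (ξ - t • n) (frontier D) = t := by
  refine le_antisymm ((infDist_le_dist_of_mem hξ).trans_eq (h.dist_sub_smul ht)) ?_
  refine (le_infDist ⟨ξ, hξ⟩).2 fun y hy => not_lt.1 fun hlt => ?_
  exact disjoint_left.1 (disjoint_frontier_iff_isOpen.2 hD) hy
    (h.ball_sub_smul_subset htr (mem_ball'.2 hlt))

theorem norm_sub_le (h : TangentBalls D r ξ n) (h' : TangentBalls D r η n') :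
    ‖n - n'‖ ≤ ‖ξ - η‖ / r := by
  have hr := h.pos
  have hdisj {ξ η n n' : E} (h : TangentBalls D r ξ n) (h' : TangentBalls D r η n') :
      (r + r) ^ 2 ≤ ‖(ξ - η) - r • (n + n')‖ ^ 2 := by
    have hdist := (disjoint_ball_ball_iff hr hr).1
      (h'.disjoint_outer.symm.mono_left h.inner_subset)
    have e : ξ - r • n - (η + r • n') = (ξ - η) - r • (n + n') := by module
    rw [dist_eq_norm, e] at hdist
    exact pow_le_pow_left₀ (by positivity) hdist 2
  have h₁ := hdisj h h'
  have h₂ := hdisj h' h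
  rw [← neg_sub ξ η, add_comm n'] at h₂
  rw [norm_sub_sq_real, norm_smul, real_inner_smul_right, Real.norm_of_nonneg hr.le] at h₁ h₂
  rw [norm_neg, inner_neg_left] at h₂
  have hpar := parallelogram_law_with_norm ℝ n n'
  rw [h.norm_eq, h'.norm_eq] at hpar
  rw [le_div_iff₀ hr, ← sq_le_sq₀ (by positivity) (by positivity)]
  nlinarith

theorem inner_sub_le (h : TangentBalls D r ξ n) (hx : x = ξ - t • n) (hy : y ∈ D) (ht : 0 < t)
    (hyt : infDist y (frontier D) = t) (hs : ‖y - x‖ ^ 2 ≤ 4 * r * t) : ⟪y - x, n⟫ ≤ 2 * t := by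
  have hr := h.pos
  have hdist := h.infDist_add_le_dist hy
  have e : y - (ξ + r • n) = (y - x) - (t + r) • n := by rw [hx]; module
  rw [hyt, dist_eq_norm, e] at hdist
  have hsq := pow_le_pow_left₀ (by positivity) hdist 2
  rw [norm_sub_sq_real, real_inner_smul_right, norm_smul, h.norm_eq,
    Real.norm_of_nonneg (by positivity)] at hsq
  by_contra! hlt
  nlinarith [mul_lt_mul_of_pos_left hlt (show 0 < t + r by positivity)]

end TangentBalls

theorem half_add_le_dist_of_mem_segment {E : Type*} [NormedAddCommGroup E] [InnerProductSpace ℝ E]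
    {r t : ℝ} {x y z p : E} (ht : 0 ≤ t) (hr : 0 ≤ r) (hx : t + r ≤ dist x p)
    (hy : t + r ≤ dist y p) (hs : ‖y - x‖ ^ 2 ≤ 4 * r * t) (hz : z ∈ segment ℝ x y) :
    t / 2 + r ≤ dist z p := by
  rw [segment_eq_image'] at hz
  obtain ⟨θ, hθ, rfl⟩ := hz
  rw [dist_eq_norm] at hx hy ⊢
  have hx₂ := pow_le_pow_left₀ (by positivity) hx 2
  have hy₂ := pow_le_pow_left₀ (by positivity) hy 2
  have hstewart : ‖x + θ • (y - x) - p‖ ^ 2 =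
      (1 - θ) * ‖x - p‖ ^ 2 + θ * ‖y - p‖ ^ 2 - θ * (1 - θ) * ‖y - x‖ ^ 2 := by
    have e₁ : x + θ • (y - x) - p = (x - p) + θ • (y - x) := by abel
    have e₂ : y - p = (x - p) + (y - x) := by abel
    rw [e₁, e₂, norm_add_sq_real, norm_add_sq_real, real_inner_smul_right, norm_smul,
      Real.norm_eq_abs, mul_pow, sq_abs]
    ring
  have hθ₁ : θ * (1 - θ) ≤ 1 / 4 := by nlinarith [sq_nonneg (θ - 1 / 2)]
  rw [← sq_le_sq₀ (by positivity) (norm_nonneg _), hstewart]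
  calc (t / 2 + r) ^ 2 ≤ (1 - θ) * (t + r) ^ 2 + θ * (t + r) ^ 2 - 1 / 4 * (4 * r * t) := by
        nlinarith
    _ ≤ _ := by
        gcongr
        · exact sub_nonneg.2 hθ.2
        · exact hθ.1

section CollarSegment

variable {E : Type*} [NormedAddCommGroup E] [InnerProductSpace ℝ E] {D : Set E} {r t : ℝ}
  {x y z : E}

theorem half_le_infDist_of_mem_segment (hT : HasTangentBalls D r)
    (hne : (frontier D).Nonempty) (hx : x ∈ D) (hy : y ∈ D) (hxt : infDist x (frontier D) = t)
    (hyt : infDist y (frontier D) = t) (hs : ‖y - x‖ ^ 2 ≤ 4 * r * t) (hz : z ∈ segment ℝ x y) :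
    t / 2 ≤ infDist z (frontier D) := by
  refine (le_infDist hne).2 fun ξ hξ => ?_
  obtain ⟨n, h⟩ := hT ξ hξ
  have hdist := half_add_le_dist_of_mem_segment (hxt ▸ infDist_nonneg) h.pos.le
    (hxt ▸ h.infDist_add_le_dist hx) (hyt ▸ h.infDist_add_le_dist hy) hs hz
  have hr : dist ξ (ξ + r • n) = r := by
    rw [dist_self_add_right, norm_smul, h.norm_eq, Real.norm_of_nonneg h.pos.le, mul_one]
  linarith [dist_triangle z ξ (ξ + r • n)]

theorem segment_subset_of_infDist_eq (hT : HasTangentBalls D r)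
    (hne : (frontier D).Nonempty) (hx : x ∈ D) (hy : y ∈ D) (ht : 0 < t)
    (hxt : infDist x (frontier D) = t) (hyt : infDist y (frontier D) = t)
    (hs : ‖y - x‖ ^ 2 ≤ 4 * r * t) : segment ℝ x y ⊆ D := by
  refine subset_of_isPreconnected_of_disjoint_frontier (convex_segment x y).isPreconnected
    ⟨x, left_mem_segment ℝ x y, hx⟩ (disjoint_left.2 fun z hz hzf => ?_)
  have := half_le_infDist_of_mem_segment hT hne hx hy hxt hyt hs hz
  rw [infDist_zero_of_mem hzf] at this
  linarith

end CollarSegment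

/-! ### The upper bound -/

section Upper

variable {d : ℕ} {D : Set (Euc d)} {π : Euc d → Euc d} {ε c r t : ℝ} {x y z ξ n : Euc d}

theorem nvec_sub_smul (hn : ‖n‖ = 1) (ht : 0 < t) : nvec (ξ - t • n) ξ = n := by
  rw [nvec, sub_sub_cancel, norm_smul, hn, mul_one, Real.norm_of_nonneg ht.le, smul_smul,
    inv_mul_cancel₀ ht.ne', one_smul]

theorem vN_nvec_smul (hn : ‖nvec x ξ‖ = 1) (k : ℝ) : vN x ξ (k • nvec x ξ) = k • nvec x ξ := by
  rw [vN, real_inner_smul_left, real_inner_self_eq_norm_sq, hn, one_pow, mul_one]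

namespace FillingData

theorem tangentBalls_nvec (hF : FillingData D π ε c) (hT : HasTangentBalls D r) (hx : x ∈ D)
    (hxε : infDist x (frontier D) ≤ ε) : TangentBalls D r (π x) (nvec x (π x)) := by
  obtain ⟨hξ, hdist, -⟩ := hF.proj x hxε
  obtain ⟨n, h⟩ := hT _ hξ
  have hnvec := nvec_sub_smul (ξ := π x) h.norm_eq (hF.infDist_pos hx)
  rw [← h.eq_sub_infDist_smul hx hdist] at hnvec
  rwa [hnvec]

theorem eq_proj_sub_smul_nvec (hF : FillingData D π ε c) (hx : x ∈ D)
    (hxε : infDist x (frontier D) ≤ ε) : x = π x - infDist x (frontier D) • nvec x (π x) := by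
  have hdist := (hF.proj x hxε).2.1
  rw [dist_comm, dist_eq_norm] at hdist
  rw [nvec, hdist, smul_inv_smul₀ (hF.infDist_pos hx).ne', sub_sub_cancel]

theorem Fmet_sub_smul (hF : FillingData D π ε c) (h : TangentBalls D r ξ n)
    (hξ : ξ ∈ frontier D) (ht : 0 < t) (htr : t ≤ r) (htε : t ≤ ε) (k : ℝ) :
    Fmet D π ε c (ξ - t • n) (k • n) = |k| / (2 * t) := by
  have hδ := h.infDist_sub_smul hF.isOpen hξ ht.le htr
  have hξπ : ξ = π (ξ - t • n) :=
    (hF.proj _ (hδ.trans_le htε)).2.2 ξ hξ ((h.dist_sub_smul ht.le).trans hδ.symm)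
  have hn := nvec_sub_smul (ξ := ξ) h.norm_eq ht
  have hvN : vN (ξ - t • n) ξ (k • n) = k • n := by
    simpa only [hn] using vN_nvec_smul (x := ξ - t • n) (ξ := ξ) (by rw [hn, h.norm_eq]) k
  rw [Fmet, if_pos (hδ.trans_le htε), ← hξπ, vT, hvN, hδ, sub_self, norm_zero, zero_div, add_zero,
    norm_smul, h.norm_eq, mul_one, Real.norm_eq_abs]

theorem dF_sub_smul_le (hF : FillingData D π ε c) (h : TangentBalls D r ξ n)
    (hξ : ξ ∈ frontier D) (hrε : r ≤ ε) {a b : ℝ} (ha : 0 < a) (hab : a ≤ b) (hbr : b ≤ r) :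
    dF D π ε c (ξ - a • n) (ξ - b • n) ≤ (Real.log b - Real.log a) / 2 := by
  have hpoint (θ : ℝ) : ξ - a • n + θ • (ξ - b • n - (ξ - a • n)) =
      ξ - (a + (b - a) * θ) • n := by module
  have hheight {θ : ℝ} (hθ : θ ∈ Icc (0 : ℝ) 1) : 0 < a + (b - a) * θ ∧ a + (b - a) * θ ≤ r := by
    have := mul_nonneg (sub_nonneg.2 hab) hθ.1
    have := mul_le_of_le_one_right (sub_nonneg.2 hab) hθ.2
    constructor <;> linarith
  refine dF_le_of_segment hF.core_pos.le ?_ (le_of_eq ?_)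
  · rw [segment_eq_image']
    rintro _ ⟨θ, hθ, rfl⟩
    have := hheight hθ
    simp only [hpoint]
    exact h.ball_sub_smul_subset this.2 (mem_ball_self this.1)
  calc ∫ θ in (0 : ℝ)..1, Fmet D π ε c (ξ - a • n + θ • (ξ - b • n - (ξ - a • n)))
          (ξ - b • n - (ξ - a • n))
      = ∫ θ in (0 : ℝ)..1, 1 / 2 * ((b - a) * (a + (b - a) * θ)⁻¹) := by
        refine intervalIntegral.integral_congr fun θ hθ => ?_
        rw [uIcc_of_le zero_le_one] at hθ
        have e : ξ - b • n - (ξ - a • n) = (a - b) • n := by module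
        obtain ⟨hpos, hle⟩ := hheight hθ
        simp only [hpoint]
        rw [e, hF.Fmet_sub_smul h hξ hpos hle (hle.trans hrε), abs_sub_comm,
          abs_of_nonneg (sub_nonneg.2 hab)]
        field_simp
    _ = 1 / 2 * ∫ s in a..b, s⁻¹ := by
        have h := intervalIntegral.mul_integral_comp_add_mul (a := 0) (b := 1)
          (f := fun s : ℝ => s⁻¹) (b - a) a
        simp only [mul_zero, add_zero, mul_one, add_sub_cancel] at h
        rw [intervalIntegral.integral_const_mul, intervalIntegral.integral_const_mul, h]
    _ = (Real.log b - Real.log a) / 2 := by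
        rw [integral_inv_of_pos ha (ha.trans_le hab), Real.log_div (ha.trans_le hab).ne' ha.ne']
        ring

theorem exists_infDist_eq_and_dF_le (hF : FillingData D π ε c) (hT : HasTangentBalls D r)
    (hrε : r ≤ ε) (hx : x ∈ D) (hxt : infDist x (frontier D) ≤ t) (htr : t ≤ r) :
    ∃ x' ∈ D, infDist x' (frontier D) = t ∧ dist x x' ≤ t ∧
      dF D π ε c x x' ≤ Real.log √t - Real.log (height D ε x) := by
  have hδ := hF.infDist_pos hx
  have ht : 0 < t := hδ.trans_le hxt
  have hxε := hxt.trans (htr.trans hrε)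
  have hξ := (hF.proj x hxε).1
  have h := hF.tangentBalls_nvec hT hx hxε
  have hxξ := hF.eq_proj_sub_smul_nvec hx hxε
  rw [height_of_infDist_le hxε, Real.log_sqrt ht.le, Real.log_sqrt hδ.le, ← sub_div]
  set δ := infDist x (frontier D)
  set ξ := π x
  set n := nvec x ξ
  refine ⟨ξ - t • n, h.ball_sub_smul_subset htr (mem_ball_self ht),
    h.infDist_sub_smul hF.isOpen hξ ht.le htr, ?_, ?_⟩
  · rw [hxξ, dist_eq_norm, sub_sub_sub_cancel_left, ← sub_smul, norm_smul, h.norm_eq, mul_one,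
      Real.norm_of_nonneg (sub_nonneg.2 hxt)]
    linarith
  · rw [hxξ]
    exact hF.dF_sub_smul_le h hξ hrε hδ hxt htr

theorem inner_nvec_le (hF : FillingData D π ε c) (hT : HasTangentBalls D r) (htε : t ≤ ε)
    (hx : x ∈ D) (hy : y ∈ D) (hxt : infDist x (frontier D) = t) (hyt : infDist y (frontier D) = t)
    (hs : ‖y - x‖ ^ 2 ≤ 4 * r * t) (hz : z ∈ segment ℝ x y) (hzD : z ∈ D)
    (hzε : infDist z (frontier D) ≤ ε) : ⟪y - x, nvec z (π z)⟫ ≤ 18 * t := by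
  have ht : 0 < t := hxt ▸ hF.infDist_pos hx
  have hxε := hxt.trans_le htε
  have hnx := hF.tangentBalls_nvec hT hx hxε
  have hnz := hF.tangentBalls_nvec hT hzD hzε
  rcases lt_or_ge ‖y - x‖ t with hst | hst
  · have := real_inner_le_norm (y - x) (nvec z (π z))
    rw [hnz.norm_eq] at this
    linarith
  have hr := hnz.pos
  have hzx : dist z x ≤ ‖y - x‖ := by
    rw [← dist_eq_norm, dist_comm z, dist_comm y]
    linarith [dist_add_dist_of_mem_segment hz, dist_nonneg (x := z) (y := y)]
  have hproj : ‖π z - π x‖ ≤ 4 * ‖y - x‖ := by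
    rw [← dist_eq_norm]
    have htri := dist_triangle4 (π z) z x (π x)
    rw [dist_comm (π z) z, (hF.proj z hzε).2.1, (hF.proj x hxε).2.1] at htri
    linarith [infDist_le_infDist_add_dist (s := frontier D) (x := z) (y := x)]
  calc ⟪y - x, nvec z (π z)⟫ =
        ⟪y - x, nvec x (π x)⟫ + ⟪y - x, nvec z (π z) - nvec x (π x)⟫ := by
        rw [inner_sub_right]; ring
    _ ≤ 2 * t + ‖y - x‖ * (4 * ‖y - x‖ / r) := by
        gcongr
        · exact hnx.inner_sub_le (hxt ▸ hF.eq_proj_sub_smul_nvec hx hxε) hy ht hyt hs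
        · refine (real_inner_le_norm _ _).trans ?_
          gcongr
          exact (hnz.norm_sub_le hnx).trans (by gcongr)
    _ = 2 * t + 4 * (‖y - x‖ ^ 2 / r) := by ring
    _ ≤ 2 * t + 4 * (4 * t) := by
        gcongr
        rw [div_le_iff₀ hr]
        linarith
    _ = 18 * t := by ring

theorem norm_vN_le_of_mem_segment (hF : FillingData D π ε c) (hT : HasTangentBalls D r)
    (htε : t ≤ ε) (hx : x ∈ D) (hy : y ∈ D) (hxt : infDist x (frontier D) = t)
    (hyt : infDist y (frontier D) = t) (hs : ‖y - x‖ ^ 2 ≤ 4 * r * t) (hz : z ∈ segment ℝ x y)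
    (hzD : z ∈ D) (hzε : infDist z (frontier D) ≤ ε) : ‖vN z (π z) (y - x)‖ ≤ 18 * t := by
  rw [norm_vN (hF.proj_ne hzD hzε), abs_le', ← inner_neg_left, neg_sub]
  exact ⟨hF.inner_nvec_le hT htε hx hy hxt hyt hs hz hzD hzε, hF.inner_nvec_le hT htε hy hx hyt hxt
    (by rwa [norm_sub_rev]) (by rwa [segment_symm]) hzD hzε⟩

theorem dF_le_of_infDist_eq (hF : FillingData D π ε c) (hT : HasTangentBalls D r) (hrε : r ≤ ε)
    (hr₁ : r ≤ 1) (hx : x ∈ D) (hy : y ∈ D) (hxt : infDist x (frontier D) = t)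
    (hyt : infDist y (frontier D) = t) (htr : t ≤ r) (hs : ‖y - x‖ ^ 2 ≤ 4 * r * t) :
    dF D π ε c x y ≤ 24 + 2 * c := by
  have ht : 0 < t := hxt ▸ hF.infDist_pos hx
  have hc := hF.core_pos
  have hne := hF.frontier_nonempty
  have hD := segment_subset_of_infDist_eq hT hne hx hy ht hxt hyt hs
  refine dF_le_of_forall_segment hc.le hD fun z hz => ?_
  have hδ := half_le_infDist_of_mem_segment hT hne hx hy hxt hyt hs hz
  have hs' : ‖y - x‖ ^ 2 ≤ 4 * t := hs.trans (by nlinarith)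
  rw [Fmet]
  split_ifs with hzε
  · have hN : ‖vN z (π z) (y - x)‖ / (2 * infDist z (frontier D)) ≤ 18 := by
      rw [div_le_iff₀ (by linarith)]
      linarith [hF.norm_vN_le_of_mem_segment hT (htr.trans hrε) hx hy hxt hyt hs hz (hD hz) hzε]
    have hsqrt : ‖y - x‖ ≤ 3 * √(infDist z (frontier D)) := by
      rw [← sq_le_sq₀ (norm_nonneg _) (by positivity), mul_pow, Real.sq_sqrt infDist_nonneg]
      linarith
    have hT : ‖vT z (π z) (y - x)‖ / √(infDist z (frontier D)) ≤ 6 := by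
      rw [div_le_iff₀ (Real.sqrt_pos.2 (by linarith))]
      linarith [norm_vT_le z (π z) (y - x)]
    linarith
  · have : ‖y - x‖ ≤ 2 := by
      rw [← sq_le_sq₀ (norm_nonneg _) zero_le_two]
      linarith
    nlinarith

theorem dF_le_of_quasiDist_le (hF : FillingData D π ε c) (hT : HasTangentBalls D r) (hr : 0 < r)
    (hrε : r ≤ ε) (hr₁ : r ≤ 1) (hx : x ∈ D) (hy : y ∈ D) (hq : quasiDist D ε x y ≤ r / 2) :
    dF D π ε c x y ≤ 2 * Real.log (quasiDist D ε x y) - Real.log (height D ε x) -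
      Real.log (height D ε y) + (24 + 2 * c - Real.log r) := by
  have hq₀ : 0 < quasiDist D ε x y := hF.quasiDist_pos hx
  have hdist : dist x y ≤ quasiDist D ε x y :=
    le_add_of_nonneg_right (le_max_of_le_left height_nonneg)
  have hhx : height D ε x ≤ quasiDist D ε x y :=
    (le_max_left _ _).trans (le_add_of_nonneg_left dist_nonneg)
  have hhy : height D ε y ≤ quasiDist D ε x y :=
    (le_max_right _ _).trans (le_add_of_nonneg_left dist_nonneg)
  set q := quasiDist D ε x y
  have hqt : q ^ 2 ≤ q ^ 2 / r := le_div_self (sq_nonneg q) hr hr₁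
  have htq : q ^ 2 / r ≤ q / 2 := by
    rw [div_le_iff₀ hr]
    nlinarith
  have hlow {z : Euc d} (hz : height D ε z ≤ q) : infDist z (frontier D) ≤ q ^ 2 / r := by
    have hsq := pow_le_pow_left₀ height_nonneg hz 2
    rw [sq_height hF.collar_pos.le, min_le_iff] at hsq
    rcases hsq with h | h
    · exact h.trans hqt
    · nlinarith
  obtain ⟨x', hx', hx't, hxx', hdFx⟩ :=
    hF.exists_infDist_eq_and_dF_le hT hrε hx (hlow hhx) (by linarith)
  obtain ⟨y', hy', hy't, hyy', hdFy⟩ :=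
    hF.exists_infDist_eq_and_dF_le hT hrε hy (hlow hhy) (by linarith)
  have hx'y' : ‖y' - x'‖ ≤ 2 * q := by
    rw [← dist_eq_norm, dist_comm]
    linarith [dist_triangle4 x' x y y', dist_comm x' x]
  have hcross := hF.dF_le_of_infDist_eq hT hrε hr₁ hx' hy' hx't hy't (by linarith)
    ((pow_le_pow_left₀ (norm_nonneg _) hx'y' 2).trans_eq (by field_simp; ring))
  have hlog : 2 * Real.log √(q ^ 2 / r) = 2 * Real.log q - Real.log r := by
    rw [Real.log_sqrt (by positivity), Real.log_div (by positivity) hr.ne', Real.log_pow]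
    push_cast
    ring
  linarith [hF.dF_triangle hx hx' hy, hF.dF_triangle hx' hy' hy, hF.dF_comm hy' hy]

theorem exists_le_infDist_and_dF_le (hF : FillingData D π ε c) (hT : HasTangentBalls D r)
    (hr : 0 < r) (hrε : r ≤ ε) (hx : x ∈ D) :
    ∃ x' ∈ D, r ≤ infDist x' (frontier D) ∧
      dF D π ε c x x' ≤ Real.log √ε - Real.log (height D ε x) := by
  rcases le_total (infDist x (frontier D)) r with h | h
  · obtain ⟨x', hx', hx'r, -, hdF⟩ := hF.exists_infDist_eq_and_dF_le hT hrε hx h le_rfl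
    refine ⟨x', hx', hx'r.ge, hdF.trans ?_⟩
    gcongr
  · refine ⟨x, hx, h, ?_⟩
    rw [dF_self hF.core_pos.le hx, sub_nonneg]
    exact Real.log_le_log (hF.height_pos hx) height_le

theorem exists_dF_le_two_mul_log_quasiDist_sub (hF : FillingData D π ε c)
    (hT : HasTangentBalls D r) (hr : 0 < r) (hrε : r ≤ ε) (hr₁ : r ≤ 1) :
    ∃ C, ∀ x ∈ D, ∀ y ∈ D, dF D π ε c x y ≤ 2 * Real.log (quasiDist D ε x y) -
      Real.log (height D ε x) - Real.log (height D ε y) + C := by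
  obtain ⟨M, hM⟩ := hF.exists_forall_dF_le hr
  refine ⟨max (24 + 2 * c - Real.log r) (2 * Real.log √ε + M - 2 * Real.log (r / 2)),
    fun x hx y hy => ?_⟩
  rcases le_total (quasiDist D ε x y) (r / 2) with hq | hq
  · refine (hF.dF_le_of_quasiDist_le hT hr hrε hr₁ hx hy hq).trans ?_
    gcongr
    exact le_max_left _ _
  · obtain ⟨x', hx', hx'r, hdFx⟩ := hF.exists_le_infDist_and_dF_le hT hr hrε hx
    obtain ⟨y', hy', hy'r, hdFy⟩ := hF.exists_le_infDist_and_dF_le hT hr hrε hy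
    have hlog := Real.log_le_log (half_pos hr) hq
    refine le_trans ?_ (add_le_add_right (le_max_right _ _) _)
    linarith [hF.dF_triangle hx hx' hy, hF.dF_triangle hx' hy' hy, hF.dF_comm hy' hy,
      hM x' hx' y' hy' hx'r hy'r]

end FillingData

end Upper

/-! ### Gromov hyperbolicity of the filling metric -/

theorem dF_gromov_hyperbolic_general {d : ℕ} {D : Set (Euc d)} (hD : IsC2BoundedDomain D)
    {ε : ℝ} (hε : 0 < ε) {c : ℝ} (hc : 0 < c) {π : Euc d → Euc d}
    (hπ : ∀ x : Euc d, infDist x (frontier D) ≤ ε →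
      π x ∈ frontier D ∧ dist x (π x) = infDist x (frontier D) ∧
        ∀ q ∈ frontier D, dist x q = infDist x (frontier D) → q = π x) :
    IsGromovHyperbolicOn D (dF D π ε c) := by
  have hF : FillingData D π ε c := ⟨hD.1, hD.2.1, hD.2.2.1, hε, hc, hπ⟩
  obtain ⟨r, hT, hr, hrε⟩ := (hD.eventually_hasTangentBalls.and
    (Ioc_mem_nhdsGT (lt_min hε one_pos))).exists
  obtain ⟨C, hC⟩ := hF.exists_two_mul_log_quasiDist_sub_le_dF
  obtain ⟨C', hC'⟩ := hF.exists_dF_le_two_mul_log_quasiDist_sub hT hr (hrε.trans (min_le_left _ _))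
    (hrε.trans (min_le_right _ _))
  refine isGromovHyperbolicOn_of_abs_sub_two_mul_log_le (q := quasiDist D ε)
    (f := fun x => Real.log (height D ε x)) (C := max C C') (fun _ _ => quasiDist_nonneg)
    (fun _ _ => quasiDist_comm) (fun _ _ _ => quasiDist_triangle)
    (fun x hx _ _ => (hF.quasiDist_pos hx).ne') fun x hx y hy => abs_sub_le_iff.2 ⟨?_, ?_⟩
  · linarith [hC' x hx y hy, le_max_right C C']
  · linarith [hC x hx y hy, le_max_left C C']

/-- For a bounded strongly minimally convex domain the metric space
`(D, d_F)` (the intrinsic distance of the filling Finsler metric) is Gromov hyperbolic: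
the four-point condition holds with some constant `2δ`. -/
theorem dF_gromov_hyperbolic
    (d : ℕ) (hd : 3 ≤ d) (D : Set (Euc d)) (hD : IsStronglyMinimallyConvex D)
    (ε : ℝ) (hε0 : 0 < ε) (hε1 : ε < 1) (c : ℝ) (hc : 0 < c)
    (π : Euc d → Euc d)
    (hπ : ∀ x : Euc d, Metric.infDist x (frontier D) ≤ ε →
      π x ∈ frontier D ∧ dist x (π x) = Metric.infDist x (frontier D) ∧
      ∀ q ∈ frontier D, dist x q = Metric.infDist x (frontier D) → q = π x) :
    ∃ δ : ℝ, 0 ≤ δ ∧ ∀ x₁ ∈ D, ∀ x₂ ∈ D, ∀ x₃ ∈ D, ∀ x₄ ∈ D,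
      dF D π ε c x₁ x₂ + dF D π ε c x₃ x₄ ≤
        max (dF D π ε c x₁ x₃ + dF D π ε c x₂ x₄)
            (dF D π ε c x₁ x₄ + dF D π ε c x₂ x₃)
          + 2 * δ := by
  obtain ⟨hopen, hconn, hbdd, U, u, hU, hsub, hu, hneg, hzero, hdu, -⟩ := hD
  exact dF_gromov_hyperbolic_general ⟨hopen, hconn, hbdd, U, u, hU, hsub, hu, hneg, hzero, hdu⟩
    hε0 hc hπ
end
end

section
/- Let d ≥ 3, let D ⊂ ℝ^d be a convex domain, and let f : 𝔻 → ∂D be a non-constant conformal harmonic map. Then there exists an affine 2-plane L ⊂ ℝ^d such that ∂D ∩ L has non-empty interior in L. -/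
open scoped RealInnerProductSpace ENNReal
open Metric Set Filter

noncomputable section

/-!
Let `ℓ` be a functional supporting the convex set at one point of the image of `f`. The harmonic
function `ℓ ∘ f` attains its maximum there, so it is constant: the whole image of `f`, and hence
its convex hull, lies in the hyperplane where `ℓ` is maximal and therefore in the boundary. Since
the differential of a conformal map is everywhere zero or injective, the image is not contained in
a line, so its convex hull contains a nondegenerate triangle.
-/

open InnerProductSpace Module Topology
open scoped Laplacian

section Laplacian

variable {V W E : Type*} [NormedAddCommGroup V] [InnerProductSpace ℝ V] [FiniteDimensional ℝ V]
  [NormedAddCommGroup W] [InnerProductSpace ℝ W] [FiniteDimensional ℝ W]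
  [NormedAddCommGroup E] [NormedSpace ℝ E]

lemma laplacian_comp_linearIsometryEquiv (f : W → E) (e : V ≃ₗᵢ[ℝ] W) :
    Δ (f ∘ e) = Δ f ∘ e := by
  let b := stdOrthonormalBasis ℝ V
  have hcomp (x : V) : iteratedFDeriv ℝ 2 (f ∘ e) x =
      (iteratedFDeriv ℝ 2 f (e x)).compContinuousLinearMap fun _ ↦ ↑e.toContinuousLinearEquiv := by
    have h := e.toContinuousLinearEquiv.iteratedFDerivWithin_comp_right f uniqueDiffOn_univ
      (mem_univ (e x)) 2
    simp only [preimage_univ, iteratedFDerivWithin_univ] at h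
    exact h
  ext x
  rw [Function.comp_apply, laplacian_eq_iteratedFDeriv_orthonormalBasis f (b.map e),
    laplacian_eq_iteratedFDeriv_orthonormalBasis _ b]
  refine Finset.sum_congr rfl fun i _ ↦ ?_
  rw [hcomp, ContinuousMultilinearMap.compContinuousLinearMap_apply]
  congr 1
  ext j
  fin_cases j <;> rfl

lemma harmonicAt_comp_linearIsometryEquiv {f : W → E} (e : V ≃ₗᵢ[ℝ] W) {x : V}
    (hf : HarmonicAt f (e x)) : HarmonicAt (f ∘ e) x := by
  refine ⟨hf.1.comp x e.contDiff.contDiffAt, ?_⟩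
  rw [laplacian_comp_linearIsometryEquiv]
  exact e.continuous.continuousAt.eventually hf.2

end Laplacian

section MaximumPrinciple

lemma eventually_eq_of_harmonicAt_of_isLocalMax {u : ℂ → ℝ} {z₀ : ℂ}
    (hu : HarmonicAt u z₀) (hmax : IsLocalMax u z₀) : ∀ᶠ z in 𝓝 z₀, u z = u z₀ := by
  -- With `u = re G` for a holomorphic `G`, the modulus of `exp ∘ G` is `exp ∘ u`.
  obtain ⟨r, hr, hball⟩ := Metric.eventually_nhds_iff_ball.1 hu.eventually
  obtain ⟨G, hG, hre⟩ :=
    HarmonicOnNhd.exists_analyticOnNhd_ball_re_eq (f := u) (z := z₀) (R := r) hball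
  have hr₀ : ball z₀ r ∈ 𝓝 z₀ := ball_mem_nhds z₀ hr
  have hnorm : EqOn (fun z ↦ ‖Complex.exp (G z)‖) (fun z ↦ Real.exp (u z)) (ball z₀ r) := by
    intro z hz
    simp only [Complex.norm_exp, ← hre hz]
  have hdiff : ∀ᶠ z in 𝓝 z₀, DifferentiableAt ℂ (fun z ↦ Complex.exp (G z)) z :=
    mem_of_superset hr₀ fun z hz ↦ (hG z hz).differentiableAt.cexp
  have hmax' : IsLocalMax (norm ∘ fun z ↦ Complex.exp (G z)) z₀ :=
    (hmax.comp_mono Real.exp_monotone).congr (hnorm.eventuallyEq_of_mem hr₀).symm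
  filter_upwards [hr₀, Complex.norm_eventually_eq_of_isLocalMax hdiff hmax'] with z hz hexp
  exact Real.exp_injective <|
    (hnorm hz).symm.trans <| hexp.trans <| hnorm (mem_ball_self hr)

lemma eqOn_of_harmonicOnNhd_of_isLocalMax_complex {u : ℂ → ℝ} {U : Set ℂ} (hU : IsPreconnected U)
    (hu : HarmonicOnNhd u U) {z₀ : ℂ} (hz₀ : z₀ ∈ U) (hmax : IsLocalMax u z₀) :
    EqOn u (fun _ ↦ u z₀) U :=
  AnalyticOnNhd.eqOn_of_preconnected_of_eventuallyEq (fun z hz ↦ HarmonicAt.analyticAt (hu z hz))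
    analyticOnNhd_const hU hz₀ (eventually_eq_of_harmonicAt_of_isLocalMax (hu z₀ hz₀) hmax)

lemma eqOn_of_harmonicOnNhd_of_isLocalMax {V : Type*} [NormedAddCommGroup V]
    [InnerProductSpace ℝ V] [FiniteDimensional ℝ V] (hV : finrank ℝ V = 2) {u : V → ℝ} {U : Set V}
    (hU : IsPreconnected U) (hu : HarmonicOnNhd u U) {x₀ : V} (hx₀ : x₀ ∈ U)
    (hmax : IsLocalMax u x₀) : EqOn u (fun _ ↦ u x₀) U := by
  let e : ℂ ≃ₗᵢ[ℝ] V :=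
    Complex.isometryOfOrthonormal ((stdOrthonormalBasis ℝ V).reindex (finCongr hV))
  have hpre : IsPreconnected (e ⁻¹' U) := e.toHomeomorph.isPreconnected_preimage.2 hU
  have hue : HarmonicOnNhd (u ∘ e) (e ⁻¹' U) := fun z hz ↦
    harmonicAt_comp_linearIsometryEquiv e (hu (e z) hz)
  have hmaxe : IsLocalMax (u ∘ e) (e.symm x₀) := by
    refine IsLocalMax.comp_continuous ?_ e.continuous.continuousAt
    rwa [e.apply_symm_apply]
  intro x hx
  have h := eqOn_of_harmonicOnNhd_of_isLocalMax_complex hpre hue (z₀ := e.symm x₀)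
    (by rwa [mem_preimage, e.apply_symm_apply]) hmaxe (x := e.symm x)
    (by rwa [mem_preimage, e.apply_symm_apply])
  simpa only [Function.comp_apply, e.apply_symm_apply] using h

end MaximumPrinciple

section SupportingFunctional

lemma exists_supporting_functional {E : Type*} [AddCommGroup E] [Module ℝ E] [TopologicalSpace E]
    [IsTopologicalAddGroup E] [ContinuousSMul ℝ E] {D : Set E} (hD : Convex ℝ D) {x : E}
    (hx : x ∉ interior D) :
    ∃ ℓ : StrongDual ℝ E, (∀ y ∈ interior D, ℓ y < ℓ x) ∧ ∀ y ∈ closure D, ℓ y ≤ ℓ x := by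
  rcases (interior D).eq_empty_or_nonempty with hempty | hne
  · exact ⟨0, by simp [hempty], by simp⟩
  obtain ⟨ℓ, hℓ⟩ := geometric_hahn_banach_open_point hD.interior isOpen_interior hx
  refine ⟨ℓ, hℓ, ?_⟩
  rw [← hD.closure_interior_eq_closure_of_nonempty_interior hne]
  exact closure_minimal (fun y hy ↦ (hℓ y hy).le) (isClosed_le ℓ.continuous continuous_const)

lemma convexHull_image_subset_frontier_of_harmonicOnNhd {V E : Type*} [NormedAddCommGroup V]
    [InnerProductSpace ℝ V] [FiniteDimensional ℝ V] [NormedAddCommGroup E] [NormedSpace ℝ E]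
    (hV : finrank ℝ V = 2) {D : Set E} (hD : Convex ℝ D) {U : Set V} (hUo : IsOpen U)
    (hUc : IsPreconnected U) {f : V → E} (hf : HarmonicOnNhd f U) (hfD : MapsTo f U (frontier D)) :
    convexHull ℝ (f '' U) ⊆ frontier D := by
  rcases U.eq_empty_or_nonempty with rfl | ⟨z₀, hz₀⟩
  · simp
  obtain ⟨ℓ, hint, hcl⟩ := exists_supporting_functional hD (hfD hz₀).2
  have hmax : IsLocalMax (ℓ ∘ f) z₀ := by
    filter_upwards [hUo.mem_nhds hz₀] with z hz using hcl (f z) (hfD hz).1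
  have hconst : EqOn (ℓ ∘ f) (fun _ ↦ ℓ (f z₀)) U :=
    eqOn_of_harmonicOnNhd_of_isLocalMax hV hUc (hf.comp_CLM ℓ) hz₀ hmax
  have hhull_closure : convexHull ℝ (f '' U) ⊆ closure D :=
    convexHull_min (image_subset_iff.2 fun z hz ↦ (hfD hz).1) hD.closure
  have hhull_plane : convexHull ℝ (f '' U) ⊆ {y | ℓ y = ℓ (f z₀)} :=
    convexHull_min (image_subset_iff.2 hconst) (convex_hyperplane ℓ.toLinearMap.isLinear _)
  exact fun y hy ↦ ⟨hhull_closure hy, fun hyD ↦ (hint y hyD).ne (hhull_plane hy)⟩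

end SupportingFunctional

section PlaneDisk

lemma exists_affineIndependent_of_not_collinear {k W P : Type*} [DivisionRing k] [AddCommGroup W]
    [Module k W] [AddTorsor W P] {s : Set P} (hs : ¬Collinear k s) :
    ∃ p₁ ∈ s, ∃ p₂ ∈ s, ∃ p₃ ∈ s, AffineIndependent k ![p₁, p₂, p₃] := by
  obtain ⟨p₁, hp₁, p₂, hp₂, hne⟩ : s.Nontrivial :=
    not_subsingleton_iff.1 fun h ↦ hs <|
      h.induction_on (collinear_empty k P) (collinear_singleton k)
  have hline : ¬s ⊆ line[k, p₁, p₂] := fun h ↦ hs <| by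
    have hle : vectorSpan k s ≤ vectorSpan k {p₁, p₂} := by
      rw [← direction_affineSpan k s, ← direction_affineSpan k {p₁, p₂}]
      exact AffineSubspace.direction_le (affineSpan_le.2 h)
    exact (Submodule.rank_mono hle).trans (collinear_pair k p₁ p₂)
  obtain ⟨p₃, hp₃, hp₃line⟩ := not_subset.1 hline
  exact ⟨p₁, hp₁, p₂, hp₂, p₃, hp₃, affineIndependent_of_ne_of_mem_of_mem_of_notMem hne
    (left_mem_affineSpan_pair k p₁ p₂) (right_mem_affineSpan_pair k p₁ p₂) hp₃line⟩

lemma mem_nhdsWithin_affineSpan_of_mem_intrinsicInterior {k W P : Type*} [Ring k]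
    [AddCommGroup W] [Module k W] [TopologicalSpace P] [AddTorsor W P] {s : Set P} {p : P}
    (hp : p ∈ intrinsicInterior k s) : s ∈ 𝓝[affineSpan k s] p := by
  obtain ⟨y, hy, rfl⟩ := mem_intrinsicInterior.1 hp
  exact preimage_coe_mem_nhds_subtype.1 (mem_interior_iff_mem_nhds.1 hy)

variable {E : Type*} [NormedAddCommGroup E] [NormedSpace ℝ E] {s : Set E}

lemma intrinsicInterior_nonempty_of_finiteDimensional_vectorSpan (hs : Convex ℝ s)
    (hne : s.Nonempty) [FiniteDimensional ℝ (vectorSpan ℝ s)] :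
    (intrinsicInterior ℝ s).Nonempty := by
  obtain ⟨p, hp⟩ := hne
  let φ : vectorSpan ℝ s →ᵃⁱ[ℝ] E := (AffineIsometryEquiv.vaddConst ℝ p).toAffineIsometry.comp
    (vectorSpan ℝ s).subtypeₗᵢ.toAffineIsometry
  have hφ : φ '' (φ ⁻¹' s) = s := image_preimage_eq_of_subset fun q hq ↦
    ⟨⟨q -ᵥ p, vsub_mem_vectorSpan ℝ hq hp⟩, vsub_vadd q p⟩
  have hpre : (intrinsicInterior ℝ (φ ⁻¹' s)).Nonempty :=
    Set.Nonempty.intrinsicInterior (hs.affine_preimage φ.toAffineMap)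
      ⟨0, by simpa [φ] using hp⟩
  rw [← hφ, φ.intrinsicInterior_image]
  exact hpre.image φ

lemma exists_plane_disk_subset_convexHull (hs : ¬Collinear ℝ s) :
    ∃ Λ : Submodule ℝ E, finrank ℝ Λ = 2 ∧ ∃ p ∈ convexHull ℝ s, ∃ r > 0,
      ∀ q, q - p ∈ Λ → dist q p < r → q ∈ convexHull ℝ s := by
  obtain ⟨p₁, hp₁, p₂, hp₂, p₃, hp₃, hind⟩ := exists_affineIndependent_of_not_collinear hs
  have hsub : convexHull ℝ (range ![p₁, p₂, p₃]) ⊆ convexHull ℝ s := by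
    refine convexHull_mono (range_subset_iff.2 fun i ↦ ?_)
    fin_cases i <;> assumption
  set t := convexHull ℝ (range ![p₁, p₂, p₃])
  have hspan : vectorSpan ℝ t = vectorSpan ℝ (range ![p₁, p₂, p₃]) := by
    rw [← direction_affineSpan, affineSpan_convexHull, direction_affineSpan]
  have hrank : finrank ℝ (vectorSpan ℝ t) = 2 := by
    rw [hspan]
    exact hind.finrank_vectorSpan (Fintype.card_fin 3)
  have : FiniteDimensional ℝ (vectorSpan ℝ t) := .of_finrank_pos (by omega)
  obtain ⟨p, hp⟩ := intrinsicInterior_nonempty_of_finiteDimensional_vectorSpan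
    (convex_convexHull ℝ (range ![p₁, p₂, p₃])) (range_nonempty _).convexHull
  have hpt : p ∈ t := intrinsicInterior_subset hp
  obtain ⟨r, hr, hball⟩ :=
    Metric.mem_nhdsWithin_iff.1 (mem_nhdsWithin_affineSpan_of_mem_intrinsicInterior hp)
  refine ⟨vectorSpan ℝ t, hrank, p, hsub hpt, r, hr, fun q hq hqp ↦ hsub (hball ⟨hqp, ?_⟩)⟩
  rw [← direction_affineSpan] at hq
  rw [← sub_add_cancel q p]
  exact AffineSubspace.vadd_mem_of_mem_direction hq (mem_affineSpan ℝ hpt)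

end PlaneDisk

section NotCollinear

variable {V E : Type*} [NormedAddCommGroup V] [NormedSpace ℝ V] [NormedAddCommGroup E]
  [NormedSpace ℝ E]

lemma fderiv_apply_mem_of_eventually_sub_mem {f : V → E} {f' : V →L[ℝ] E} {z : V}
    {K : Submodule ℝ E} (hK : IsClosed (K : Set E)) (hf : HasFDerivAt f f' z)
    (hmem : ∀ᶠ x in 𝓝 z, f x - f z ∈ K) (w : V) : f' w ∈ K := by
  have hline : Tendsto (fun t : ℝ ↦ t⁻¹ • (f (z + t • w) - f z)) (𝓝[≠] 0) (𝓝 (f' w)) :=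
    (hf.hasLineDerivAt w).tendsto_slope_zero
  have hpath : Tendsto (fun t : ℝ ↦ z + t • w) (𝓝[≠] 0) (𝓝 z) :=
    (Continuous.tendsto' (by fun_prop) 0 z (by simp)).mono_left nhdsWithin_le_nhds
  exact hK.mem_of_tendsto hline ((hpath.eventually hmem).mono fun t ht ↦ K.smul_mem _ ht)

lemma not_collinear_image_of_fderiv_eq_zero_or_injective (hV : 1 < finrank ℝ V) {U : Set V}
    (hUo : IsOpen U) (hUc : IsPreconnected U) {f : V → E} (hf : DifferentiableOn ℝ f U)
    (hf' : ∀ z ∈ U, fderiv ℝ f z = 0 ∨ Function.Injective (fderiv ℝ f z))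
    (hfU : (f '' U).Nontrivial) : ¬Collinear ℝ (f '' U) := by
  intro hcol
  have := hcol.finiteDimensional_vectorSpan
  obtain ⟨_, ⟨z, hz, rfl⟩, _, ⟨w, hw, rfl⟩, hne⟩ := hfU
  refine hne (hUo.is_const_of_fderiv_eq_zero hUc hf (fun x hx ↦ ?_) hz hw)
  refine (hf' x hx).resolve_right fun hinj ↦ ?_
  have hmem (v : V) : fderiv ℝ f x v ∈ vectorSpan ℝ (f '' U) := by
    refine fderiv_apply_mem_of_eventually_sub_mem (Submodule.closed_of_finiteDimensional _)
      (hf.differentiableAt (hUo.mem_nhds hx)).hasFDerivAt ?_ v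
    filter_upwards [hUo.mem_nhds hx] with y hy
    exact vsub_mem_vectorSpan ℝ (mem_image_of_mem f hy) (mem_image_of_mem f hx)
  have hrank : finrank ℝ V ≤ finrank ℝ (vectorSpan ℝ (f '' U)) :=
    LinearMap.finrank_le_finrank_of_injective
      (f := (fderiv ℝ f x).toLinearMap.codRestrict _ hmem)
      ((LinearMap.injective_codRestrict_iff hmem).2 hinj)
  exact (hV.trans_le hrank).not_ge (collinear_iff_finrank_le_one.1 hcol)

end NotCollinear

namespace ConformalHarmonicOnDisk

variable {d : ℕ} {f : Euc 2 → Euc d}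

lemma harmonicOnNhd (hf : ConformalHarmonicOnDisk f) : HarmonicOnNhd f unitDisk := by
  have hcont : ∀ z ∈ unitDisk, ContDiffAt ℝ 2 f z := fun z hz ↦
    hf.1.contDiffAt (isOpen_ball.mem_nhds hz)
  have hpd (i : Fin 2) : ∀ z ∈ unitDisk,
      fderiv ℝ (pd i f) z (EuclideanSpace.single i 1) =
        iteratedFDeriv ℝ 2 f z ![EuclideanSpace.single i 1, EuclideanSpace.single i 1] := by
    intro z hz
    have hdiff : DifferentiableAt ℝ (fderiv ℝ f) z :=
      ((hcont z hz).fderiv_right (m := 1) (by norm_num)).differentiableAt one_ne_zero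
    rw [iteratedFDeriv_two_apply]
    exact (DFunLike.congr_fun (fderiv_clm_apply hdiff (differentiableAt_const _)) _).trans (by simp)
  refine fun z hz ↦ ⟨hcont z hz, ?_⟩
  filter_upwards [isOpen_ball.mem_nhds hz] with y hy
  rw [laplacian_eq_iteratedFDeriv_orthonormalBasis f (EuclideanSpace.basisFun (Fin 2) ℝ)]
  simp only [Fin.sum_univ_two, EuclideanSpace.basisFun_apply, ← hpd _ y hy]
  exact hf.2.1 y hy

lemma norm_fderiv_apply (hf : ConformalHarmonicOnDisk f) {z : Euc 2} (hz : z ∈ unitDisk)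
    (w : Euc 2) : ‖fderiv ℝ f z w‖ = ‖pd 0 f z‖ * ‖w‖ := by
  obtain ⟨hnorm, horth⟩ := hf.2.2 z hz
  have hw : fderiv ℝ f z w = w 0 • pd 0 f z + w 1 • pd 1 f z := by
    have hsum := (EuclideanSpace.basisFun (Fin 2) ℝ).sum_repr w
    rw [Fin.sum_univ_two] at hsum
    simp only [EuclideanSpace.basisFun_apply, EuclideanSpace.basisFun_repr] at hsum
    rw [pd, pd, ← map_smul, ← map_smul, ← map_add, hsum]
  have hsmul : ⟪w 0 • pd 0 f z, w 1 • pd 1 f z⟫ = 0 := by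
    rw [real_inner_smul_left, real_inner_smul_right, horth, mul_zero, mul_zero]
  rw [← sq_eq_sq₀ (norm_nonneg _) (by positivity)]
  calc ‖fderiv ℝ f z w‖ ^ 2 = ‖w 0 • pd 0 f z‖ ^ 2 + ‖w 1 • pd 1 f z‖ ^ 2 := by
        rw [hw, norm_add_sq_real, hsmul, mul_zero, add_zero]
    _ = ‖pd 0 f z‖ ^ 2 * (w 0 ^ 2 + w 1 ^ 2) := by
        simp only [norm_smul, ← hnorm, mul_pow, Real.norm_eq_abs, sq_abs]
        ring
    _ = (‖pd 0 f z‖ * ‖w‖) ^ 2 := by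
        rw [mul_pow, EuclideanSpace.real_norm_sq_eq w, Fin.sum_univ_two]

lemma fderiv_eq_zero_or_injective (hf : ConformalHarmonicOnDisk f) {z : Euc 2}
    (hz : z ∈ unitDisk) : fderiv ℝ f z = 0 ∨ Function.Injective (fderiv ℝ f z) := by
  rcases eq_or_ne (pd 0 f z) 0 with h | h
  · left
    ext1 w
    simpa [h] using hf.norm_fderiv_apply hz w
  · refine .inr <| (injective_iff_map_eq_zero _).2 fun w hw ↦ ?_
    simpa [hw, h] using hf.norm_fderiv_apply hz w

lemma not_collinear_image (hf : ConformalHarmonicOnDisk f)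
    (hnc : ∃ z ∈ unitDisk, ∃ w ∈ unitDisk, f z ≠ f w) : ¬Collinear ℝ (f '' unitDisk) := by
  obtain ⟨z, hz, w, hw, hne⟩ := hnc
  exact not_collinear_image_of_fderiv_eq_zero_or_injective (by simp) isOpen_ball
    (convex_ball 0 1).isPreconnected (hf.1.differentiableOn two_ne_zero)
    (fun z hz ↦ hf.fderiv_eq_zero_or_injective hz)
    ⟨f z, mem_image_of_mem f hz, f w, mem_image_of_mem f hw, hne⟩

end ConformalHarmonicOnDisk

theorem affine_disk_in_boundary_of_conformal_disk_general {V E : Type*} [NormedAddCommGroup V]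
    [InnerProductSpace ℝ V] [FiniteDimensional ℝ V] [NormedAddCommGroup E] [NormedSpace ℝ E]
    (hV : finrank ℝ V = 2) {D : Set E} (hD : Convex ℝ D) {U : Set V} (hUo : IsOpen U)
    (hUc : IsPreconnected U) {f : V → E} (hf : HarmonicOnNhd f U) (hfD : MapsTo f U (frontier D))
    (hfU : ¬Collinear ℝ (f '' U)) :
    ∃ (x₀ : E) (Λ : Submodule ℝ E), finrank ℝ Λ = 2 ∧
      ∃ p ∈ frontier D, p - x₀ ∈ Λ ∧ ∃ r : ℝ, 0 < r ∧
        ∀ q : E, q - x₀ ∈ Λ → dist q p < r → q ∈ frontier D := by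
  obtain ⟨Λ, hΛ, p, hp, r, hr, hdisk⟩ := exists_plane_disk_subset_convexHull hfU
  have hhull : convexHull ℝ (f '' U) ⊆ frontier D :=
    convexHull_image_subset_frontier_of_harmonicOnNhd hV hD hUo hUc hf hfD
  exact ⟨p, Λ, hΛ, p, hhull hp, by simp, r, hr, fun q hq hqp ↦ hhull (hdisk q hq hqp)⟩

/-- If the boundary of a convex domain `D ⊆ ℝ^d` (`d ≥ 3`) contains a
non-constant conformal harmonic disk, then there is an affine 2-plane `L = x₀ + Λ` such
that `∂D ∩ L` has non-empty interior in `L`. -/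
theorem affine_disk_in_boundary_of_conformal_disk
    (d : ℕ) (hd : 3 ≤ d) (D : Set (Euc d))
    (hOpen : IsOpen D) (hConn : IsConnected D) (hConv : Convex ℝ D)
    (f : Euc 2 → Euc d) (hf : ConformalHarmonicOnDisk f)
    (hfb : ∀ z ∈ unitDisk, f z ∈ frontier D)
    (hnc : ∃ z ∈ unitDisk, ∃ w ∈ unitDisk, f z ≠ f w) :
    ∃ (x₀ : Euc d) (Λ : Submodule ℝ (Euc d)), Module.finrank ℝ Λ = 2 ∧
      ∃ p ∈ frontier D, p - x₀ ∈ Λ ∧ ∃ r : ℝ, 0 < r ∧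
        ∀ q : Euc d, q - x₀ ∈ Λ → dist q p < r → q ∈ frontier D := by
  exact affine_disk_in_boundary_of_conformal_disk_general finrank_euclideanSpace_fin hConv
    isOpen_ball (convex_ball 0 1).isPreconnected hf.harmonicOnNhd hfb (hf.not_collinear_image hnc)
end
end

section
/- Let d ≥ 3 and let ℍ^d = {(x,y) ∈ ℝ × ℝ^{d−1} : x > 0} be the half-space. Then for every (x,y) ∈ ℍ^d and every (u,v) ∈ ℝ × ℝ^{d−1}: g_{ℍ^d}((x,y),(u,v)) = |u|/(2x). -/
open scoped RealInnerProductSpace ENNReal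
open Metric Set Filter

noncomputable section

/-!
The normal coordinate of a conformal harmonic disk in a half-space is a positive harmonic
function, hence the real part of a holomorphic map into the right half-plane. After a Cayley
transform of the target, the Schwarz lemma bounds its gradient at the centre by twice its value
there; this is the lower bound for the metric.

For the upper bound, `d ≥ 3` leaves room for a vector `c` that is tangent to the boundary,
orthogonal to `v`, and as long as `v`. If `G` is holomorphic with `G(0) = 0`, the planar disk
`p + Re G • v + Im G • c` is conformal harmonic, and its normal coordinate depends only on `Re G`.
With `h` the height of `p` over the boundary and `u` the normal component of `v`, the choice
`G(ζ) = r ζ / (1 - s ζ)`, `s = r u / (2 h)`, gives normal coordinate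
`h Re ((1 + s ζ) / (1 - s ζ))`, which is positive as soon as `|s| ≤ 1`. So a radius `r` is
realised exactly when `r |u| ≤ 2 h`.
-/

/-! ### The Schwarz lemma for the half-plane and positive harmonic functions -/

theorem norm_sub_le_norm_add_conj {z w : ℂ} (hz : 0 ≤ z.re) (hw : 0 ≤ w.re) :
    ‖z - w‖ ≤ ‖z + starRingEnd ℂ w‖ := by
  rw [← sq_le_sq₀ (norm_nonneg _) (norm_nonneg _)]
  simp only [Complex.sq_norm, Complex.normSq_apply, Complex.sub_re, Complex.sub_im,
    Complex.add_re, Complex.add_im, Complex.conj_re, Complex.conj_im]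
  nlinarith [mul_nonneg hz hw]

theorem norm_deriv_le_of_re_pos {F : ℂ → ℂ} {c : ℂ} {R : ℝ} (hR : 0 < R)
    (hF : DifferentiableOn ℂ F (ball c R)) (hpos : ∀ z ∈ ball c R, 0 < (F z).re) :
    ‖deriv F c‖ ≤ 2 * (F c).re / R := by
  have hc : c ∈ ball c R := mem_ball_self hR
  have hFc : 0 < (F c).re := hpos c hc
  have hden : ∀ z ∈ ball c R, F z + starRingEnd ℂ (F c) ≠ 0 := fun z hz h => by
    have := congrArg Complex.re h
    simp only [Complex.add_re, Complex.conj_re, Complex.zero_re] at this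
    linarith [hpos z hz]
  let W : ℂ → ℂ := fun z => (F z - F c) / (F z + starRingEnd ℂ (F c))
  have hW : DifferentiableOn ℂ W (ball c R) := (hF.sub_const _).div (hF.add_const _) hden
  have hWmaps : MapsTo W (ball c R) (closedBall (W c) 1) := fun z hz => by
    rw [show W c = 0 by simp [W], mem_closedBall_zero_iff, norm_div]
    exact div_le_one_of_le₀ (norm_sub_le_norm_add_conj (hpos z hz).le hFc.le) (norm_nonneg _)
  have hW' : deriv W c = deriv F c / (2 * (F c).re : ℝ) := by
    have hF' := (hF.differentiableAt (isOpen_ball.mem_nhds hc)).hasDerivAt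
    refine ((hF'.sub_const _).div (hF'.add_const _) (hden c hc)).deriv.trans ?_
    have hden_c := hden c hc
    rw [Complex.add_conj] at hden_c ⊢
    field_simp
    simp
  have hSchwarz := Complex.norm_deriv_le_div_of_mapsTo_ball hW hWmaps hR
  rw [hW', norm_div, Complex.norm_real, Real.norm_of_nonneg (by positivity),
    div_le_div_iff₀ (by positivity) hR] at hSchwarz
  rw [le_div_iff₀ hR]
  linarith

theorem fderiv_clm_comp_of_hasDerivAt {E : Type*} [NormedAddCommGroup E] [NormedSpace ℝ E]
    {F : ℂ → ℂ} {F' z : ℂ} (hF : HasDerivAt F F' z) (M : ℂ →L[ℝ] E) (w : ℂ) :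
    fderiv ℝ (M ∘ F) z w = M (F' * w) := by
  rw [(M.hasFDerivAt.comp z hF.complexToReal_fderiv).fderiv]
  simp

theorem norm_fderiv_le_of_harmonicOnNhd_of_pos {u : ℂ → ℝ} {c : ℂ} {R : ℝ} (hR : 0 < R)
    (hu : InnerProductSpace.HarmonicOnNhd u (ball c R)) (hpos : ∀ z ∈ ball c R, 0 < u z) :
    ‖fderiv ℝ u c‖ ≤ 2 * u c / R := by
  obtain ⟨F, hF, hFu⟩ := hu.exists_analyticOnNhd_ball_re_eq
  have hc : c ∈ ball c R := mem_ball_self hR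
  have hderiv : ‖deriv F c‖ ≤ 2 * u c / R := by
    rw [← hFu hc]
    exact norm_deriv_le_of_re_pos hR hF.differentiableOn fun z hz =>
      (hpos z hz).trans_eq (hFu hz).symm
  have hu_eq : u =ᶠ[nhds c] Complex.reCLM ∘ F :=
    (hFu.eventuallyEq_of_mem (isOpen_ball.mem_nhds hc)).symm
  refine ContinuousLinearMap.opNorm_le_bound _ ((norm_nonneg _).trans hderiv) fun w => ?_
  calc ‖fderiv ℝ u c w‖ = |(deriv F c * w).re| := by
        rw [hu_eq.fderiv_eq, fderiv_clm_comp_of_hasDerivAt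
          (hF c hc).differentiableAt.hasDerivAt]
        rfl
    _ ≤ ‖deriv F c * w‖ := Complex.abs_re_le_norm _
    _ = ‖deriv F c‖ * ‖w‖ := norm_mul _ _
    _ ≤ 2 * u c / R * ‖w‖ := by gcongr

/-! ### Conformal harmonic disks in a complex coordinate -/

/-- The identification of `ℂ` with `ℝ²`, through which maps on `unitDisk` are read as maps on the
complex unit disk. -/
def planeIso : ℂ ≃ₗᵢ[ℝ] Euc 2 := Complex.orthonormalBasisOneI.repr

theorem planeIso_one : planeIso 1 = EuclideanSpace.single 0 1 := by
  simpa [planeIso] using Complex.orthonormalBasisOneI.repr_self 0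

theorem planeIso_I : planeIso Complex.I = EuclideanSpace.single 1 1 := by
  simpa [planeIso] using Complex.orthonormalBasisOneI.repr_self 1

theorem planeIso_preimage_unitDisk : planeIso ⁻¹' unitDisk = ball 0 1 := by
  simp [unitDisk]

theorem forall_mem_unitDisk {P : Euc 2 → Prop} :
    (∀ x ∈ unitDisk, P x) ↔ ∀ z ∈ ball (0 : ℂ) 1, P (planeIso z) := by
  rw [← planeIso_preimage_unitDisk, planeIso.surjective.forall]
  rfl

theorem harmonicOnNhd_iff_of_isOpen {E F : Type*} [NormedAddCommGroup E]
    [InnerProductSpace ℝ E] [FiniteDimensional ℝ E] [NormedAddCommGroup F] [NormedSpace ℝ F]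
    {u : E → F} {s : Set E} (hs : IsOpen s) :
    InnerProductSpace.HarmonicOnNhd u s ↔
      ContDiffOn ℝ 2 u s ∧ ∀ x ∈ s, Laplacian.laplacian u x = 0 :=
  ⟨fun h => ⟨h.contDiffOn, fun _ hx => (h _ hx).2.eq_of_nhds⟩, fun h _ hx =>
    ⟨h.1.contDiffAt (hs.mem_nhds hx), eventually_of_mem (hs.mem_nhds hx) h.2⟩⟩

section Coordinate

variable {d : ℕ} (f : Euc 2 → Euc d)

theorem fderiv_comp_planeIso (z w : ℂ) :
    fderiv ℝ (f ∘ planeIso) z w = fderiv ℝ f (planeIso z) (planeIso w) :=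
  DFunLike.congr_fun
    (planeIso.toContinuousLinearEquiv.comp_right_fderiv (f := f) (x := z)) w

theorem fderiv_comp_planeIso_one (z : ℂ) :
    fderiv ℝ (f ∘ planeIso) z 1 = pd 0 f (planeIso z) := by
  rw [fderiv_comp_planeIso, planeIso_one, pd]

theorem fderiv_comp_planeIso_I (z : ℂ) :
    fderiv ℝ (f ∘ planeIso) z Complex.I = pd 1 f (planeIso z) := by
  rw [fderiv_comp_planeIso, planeIso_I, pd]

variable {f}

theorem laplacian_comp_planeIso {z : ℂ} (hf : ContDiffAt ℝ 2 (f ∘ planeIso) z) :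
    Laplacian.laplacian (f ∘ planeIso) z =
      pd 0 (pd 0 f) (planeIso z) + pd 1 (pd 1 f) (planeIso z) := by
  have hf' : DifferentiableAt ℝ (fderiv ℝ (f ∘ planeIso)) z :=
    (hf.fderiv_right (m := 1) (by norm_num)).differentiableAt one_ne_zero
  have hsecond (v : ℂ) : fderiv ℝ (fderiv ℝ (f ∘ planeIso)) z v v =
      fderiv ℝ (fun w => fderiv ℝ (f ∘ planeIso) w v) z v := by
    rw [fderiv_clm_apply hf' (differentiableAt_const v)]
    simp
  rw [InnerProductSpace.laplacian_eq_iteratedFDeriv_complexPlane]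
  simp only [iteratedFDeriv_two_apply, Matrix.cons_val_zero, Matrix.cons_val_one, hsecond,
    fderiv_comp_planeIso_one, fderiv_comp_planeIso_I]
  exact congrArg₂ (· + ·) (fderiv_comp_planeIso_one (pd 0 f) z) (fderiv_comp_planeIso_I (pd 1 f) z)

theorem conformalHarmonicOnDisk_iff :
    ConformalHarmonicOnDisk f ↔
      InnerProductSpace.HarmonicOnNhd (f ∘ planeIso) (ball 0 1) ∧
      ∀ z ∈ ball (0 : ℂ) 1,
        ‖fderiv ℝ (f ∘ planeIso) z 1‖ = ‖fderiv ℝ (f ∘ planeIso) z Complex.I‖ ∧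
        ⟪fderiv ℝ (f ∘ planeIso) z 1, fderiv ℝ (f ∘ planeIso) z Complex.I⟫ = 0 := by
  have hcontDiff : ContDiffOn ℝ 2 (f ∘ planeIso) (ball 0 1) ↔ ContDiffOn ℝ 2 f unitDisk :=
    planeIso_preimage_unitDisk ▸ planeIso.toContinuousLinearEquiv.contDiffOn_comp_iff
  rw [harmonicOnNhd_iff_of_isOpen isOpen_ball, hcontDiff, and_assoc, ConformalHarmonicOnDisk,
    forall_mem_unitDisk, forall_mem_unitDisk]
  refine and_congr_right fun hf => and_congr (forall₂_congr fun z hz => ?_) ?_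
  · rw [laplacian_comp_planeIso ((hcontDiff.2 hf).contDiffAt (isOpen_ball.mem_nhds hz))]
    rfl
  · simp only [fderiv_comp_planeIso_one, fderiv_comp_planeIso_I]

end Coordinate

/-! ### Radii of conformal harmonic disks in a half-space -/

/-- The radii `r` that compete in the definition of `minMetric`: some conformal harmonic disk in
`D` centred at `x` has velocity `r • v` in the first coordinate direction. -/
def HasConformalDisk {d : ℕ} (D : Set (Euc d)) (x v : Euc d) (r : ℝ) : Prop :=
  ∃ f : Euc 2 → Euc d, ConformalHarmonicOnDisk f ∧ (∀ z ∈ unitDisk, f z ∈ D) ∧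
    f 0 = x ∧ pd 0 f 0 = r • v

theorem minMetric_eq_of_hasConformalDisk_iff {d : ℕ} {D : Set (Euc d)} {x v : Euc d} {A : ℝ}
    (hA : 0 ≤ A) (h : ∀ r, 0 < r → (HasConformalDisk D x v r ↔ A ≤ 1 / r)) :
    minMetric D x v = A := by
  have hmem {c : ℝ} (hc : 0 < c) (hAc : A ≤ c) : ∃ r : ℝ, 0 < r ∧ c = 1 / r ∧
      HasConformalDisk D x v r :=
    ⟨1 / c, by positivity, (one_div_one_div c).symm,
      (h _ (by positivity)).2 (by rwa [one_div_one_div])⟩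
  refine csInf_eq_of_forall_ge_of_forall_gt_exists_lt ⟨A + 1, hmem (by positivity) (by simp)⟩ ?_ ?_
  · rintro _ ⟨r, hr, rfl, hdisk⟩
    exact (h r hr).1 hdisk
  · intro w hw
    obtain ⟨c, hAc, hcw⟩ := exists_between hw
    exact ⟨c, hmem (hA.trans_lt hAc) hAc.le, hcw⟩

theorem ConformalHarmonicOnDisk.abs_apply_pd_zero_le {d : ℕ} {f : Euc 2 → Euc d}
    (hf : ConformalHarmonicOnDisk f) (ℓ : Euc d →L[ℝ] ℝ) {a : ℝ}
    (hpos : ∀ z ∈ unitDisk, a < ℓ (f z)) : |ℓ (pd 0 f 0)| ≤ 2 * (ℓ (f 0) - a) := by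
  let u : ℂ → ℝ := fun z => ℓ (f (planeIso z)) - a
  have hharm : InnerProductSpace.HarmonicOnNhd (f ∘ planeIso) (ball 0 1) :=
    (conformalHarmonicOnDisk_iff.1 hf).1
  have hu : InnerProductSpace.HarmonicOnNhd u (ball 0 1) :=
    (hharm.comp_CLM ℓ).sub (InnerProductSpace.harmonicOnNhd_const a)
  have hderiv : fderiv ℝ u 0 1 = ℓ (pd 0 f 0) := by
    have hdiff := (hharm 0 (mem_ball_self one_pos)).1.differentiableAt two_ne_zero
    rw [fderiv_sub_const, ← map_zero planeIso, ← fderiv_comp_planeIso_one]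
    exact DFunLike.congr_fun (ℓ.hasFDerivAt.comp 0 hdiff.hasFDerivAt).fderiv 1
  calc |ℓ (pd 0 f 0)| = ‖fderiv ℝ u 0 1‖ := by rw [hderiv, Real.norm_eq_abs]
    _ ≤ ‖fderiv ℝ u 0‖ * ‖(1 : ℂ)‖ := ContinuousLinearMap.le_opNorm _ _
    _ = ‖fderiv ℝ u 0‖ := by rw [norm_one, mul_one]
    _ ≤ 2 * u 0 / 1 := norm_fderiv_le_of_harmonicOnNhd_of_pos one_pos hu fun z hz =>
        sub_pos.2 (forall_mem_unitDisk.1 hpos z hz)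
    _ = 2 * (ℓ (f 0) - a) := by simp [u]

section PlaneMap

variable {E : Type*} [NormedAddCommGroup E] [InnerProductSpace ℝ E]

/-- The real-linear parametrisation `s + i t ↦ s b + t c` of the span of `b` and `c`. -/
def planeMap (b c : E) : ℂ →L[ℝ] E :=
  Complex.reCLM.smulRight b + Complex.imCLM.smulRight c

theorem planeMap_apply (b c : E) (z : ℂ) : planeMap b c z = z.re • b + z.im • c := rfl

theorem inner_planeMap {b c : E} (hnorm : ‖c‖ = ‖b‖) (horth : ⟪b, c⟫ = 0) (z w : ℂ) :
    ⟪planeMap b c z, planeMap b c w⟫ = ‖b‖ ^ 2 * ⟪z, w⟫ := by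
  have horth' : ⟪c, b⟫ = 0 := by rwa [real_inner_comm]
  simp only [planeMap_apply, inner_add_left, inner_add_right, real_inner_smul_left,
    real_inner_smul_right, horth, horth', real_inner_self_eq_norm_sq, hnorm, Complex.inner,
    Complex.mul_re, Complex.conj_re, Complex.conj_im]
  ring

theorem norm_planeMap {b c : E} (hnorm : ‖c‖ = ‖b‖) (horth : ⟪b, c⟫ = 0) (z : ℂ) :
    ‖planeMap b c z‖ = ‖b‖ * ‖z‖ := by
  rw [← sq_eq_sq₀ (norm_nonneg _) (by positivity), mul_pow, ← real_inner_self_eq_norm_sq,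
    inner_planeMap hnorm horth, real_inner_self_eq_norm_sq]

theorem exists_mem_ker_orthogonal_norm_eq (hE : 2 < Module.finrank ℝ E) (ℓ : E →L[ℝ] ℝ) (v : E)
    {t : ℝ} (ht : 0 ≤ t) : ∃ c : E, ℓ c = 0 ∧ ⟪v, c⟫ = 0 ∧ ‖c‖ = t := by
  have : FiniteDimensional ℝ E := Module.finite_of_finrank_pos (by lia)
  let Φ : E →ₗ[ℝ] ℝ × ℝ := (ℓ : E →ₗ[ℝ] ℝ).prod (innerₛₗ ℝ v)
  have : Nontrivial Φ.ker :=
    Submodule.nontrivial_iff_ne_bot.2 (Φ.ker_ne_bot_of_finrank_lt (by simpa using hE))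
  obtain ⟨⟨c, hc⟩, hct⟩ := exists_norm_eq Φ.ker ht
  obtain ⟨hℓ, hv⟩ := Prod.ext_iff.1 (LinearMap.mem_ker.1 hc)
  exact ⟨c, hℓ, hv, hct⟩

end PlaneMap

theorem hasConformalDisk_of_planeMap {d : ℕ} {D : Set (Euc d)} {p v c : Euc d} {r : ℝ}
    (hnorm : ‖c‖ = ‖v‖) (horth : ⟪v, c⟫ = 0) {G : ℂ → ℂ} (hG : DifferentiableOn ℂ G (ball 0 1))
    (hG_zero : G 0 = 0) (hG_deriv : deriv G 0 = r)
    (hD : ∀ z ∈ ball (0 : ℂ) 1, p + planeMap v c (G z) ∈ D) : HasConformalDisk D p v r := by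
  let f : Euc 2 → Euc d := fun x => p + planeMap v c (G (planeIso.symm x))
  have hf : f ∘ planeIso = fun z => p + (planeMap v c ∘ G) z := by
    ext1 z
    simp [f]
  have hfderiv {z : ℂ} (hz : z ∈ ball 0 1) (w : ℂ) :
      fderiv ℝ (f ∘ planeIso) z w = planeMap v c (deriv G z * w) := by
    rw [hf, fderiv_const_add, fderiv_clm_comp_of_hasDerivAt
      (hG.differentiableAt (isOpen_ball.mem_nhds hz)).hasDerivAt]
  refine ⟨f, conformalHarmonicOnDisk_iff.2 ⟨?_, fun z hz => ?_⟩,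
    forall_mem_unitDisk.2 fun z hz => by simpa [f] using hD z hz, by simp [f, hG_zero], ?_⟩
  · rw [hf]
    exact (InnerProductSpace.harmonicOnNhd_const p).add fun z hz =>
      (hG.analyticOnNhd isOpen_ball z hz).harmonicAt.comp_CLM _
  · rw [hfderiv hz, hfderiv hz, norm_planeMap hnorm horth, norm_planeMap hnorm horth,
      inner_planeMap hnorm horth]
    constructor
    · simp
    · simp [Complex.inner, mul_comm]
  · rw [← map_zero planeIso, ← fderiv_comp_planeIso_one, hfderiv (mem_ball_self one_pos),
      hG_deriv]
    simp [planeMap_apply]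

theorem re_one_add_div_one_sub_pos {w : ℂ} (hw : ‖w‖ < 1) : 0 < ((1 + w) / (1 - w)).re := by
  have hre : ((1 + w) / (1 - w)).re = (1 - ‖w‖ ^ 2) / ‖1 - w‖ ^ 2 := by
    simp only [Complex.div_re, Complex.sq_norm, Complex.normSq_apply, Complex.add_re,
      Complex.add_im, Complex.sub_re, Complex.sub_im, Complex.one_re, Complex.one_im]
    ring
  have hne : 1 - w ≠ 0 := sub_ne_zero.2 fun h => by simp [← h] at hw
  rw [hre]
  have : ‖w‖ ^ 2 < 1 := by nlinarith [norm_nonneg w]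
  exact div_pos (by linarith) (by positivity)

theorem exists_differentiableOn_deriv_eq_forall_pos {h u r : ℝ} (hh : 0 < h)
    (hle : |r * u| ≤ 2 * h) :
    ∃ G : ℂ → ℂ, DifferentiableOn ℂ G (ball 0 1) ∧ G 0 = 0 ∧ deriv G 0 = r ∧
      ∀ z ∈ ball (0 : ℂ) 1, 0 < h + u * (G z).re := by
  obtain ⟨s, hs_le, hrs⟩ : ∃ s : ℝ, |s| ≤ 1 ∧ r * u = 2 * h * s := by
    refine ⟨r * u / (2 * h), ?_, by field_simp⟩
    rw [abs_div, abs_of_pos (by positivity : 0 < 2 * h)]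
    exact div_le_one_of_le₀ hle (by positivity)
  have hsz {z : ℂ} (hz : z ∈ ball 0 1) : ‖s * z‖ < 1 := by
    rw [norm_mul, Complex.norm_real, Real.norm_eq_abs]
    exact mul_lt_one_of_nonneg_of_lt_one_right hs_le (norm_nonneg z) (mem_ball_zero_iff.1 hz)
  have hne {z : ℂ} (hz : z ∈ ball 0 1) : 1 - s * z ≠ 0 :=
    sub_ne_zero.2 fun heq => by simpa [← heq] using hsz hz
  let G : ℂ → ℂ := fun z => r * z / (1 - s * z)
  have hG_deriv : deriv G 0 = r := by
    have hnum : HasDerivAt (fun z : ℂ => r * z) r 0 := by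
      simpa using (hasDerivAt_id (0 : ℂ)).const_mul (r : ℂ)
    have hden : HasDerivAt (fun z : ℂ => 1 - s * z) (-s) 0 := by
      simpa using ((hasDerivAt_id (0 : ℂ)).const_mul (s : ℂ)).const_sub 1
    exact (hnum.div hden (by simp)).deriv.trans (by simp)
  refine ⟨G, .div (by fun_prop) (by fun_prop) fun _ => hne, by simp [G], hG_deriv, fun z hz => ?_⟩
  have hcayley : (h + u * G z : ℂ) = h * ((1 + s * z) / (1 - s * z)) := by
    have hrs' : (r * u : ℂ) = 2 * h * s := mod_cast hrs
    have hG_mul : G z * (1 - s * z) = r * z := div_mul_cancel₀ _ (hne hz)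
    rw [← mul_div_assoc (h : ℂ), eq_div_iff (hne hz)]
    linear_combination u * hG_mul + z * hrs'
  have hre := congrArg Complex.re hcayley
  rw [Complex.add_re, Complex.ofReal_re, Complex.re_ofReal_mul, Complex.re_ofReal_mul] at hre
  exact hre ▸ mul_pos hh (re_one_add_div_one_sub_pos (hsz hz))

theorem hasConformalDisk_halfspace_of_le {d : ℕ} (hd : 3 ≤ d) (ℓ : Euc d →L[ℝ] ℝ) {a : ℝ}
    {p v : Euc d} (hp : a < ℓ p) {r : ℝ} (hle : |r * ℓ v| ≤ 2 * (ℓ p - a)) :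
    HasConformalDisk {x | a < ℓ x} p v r := by
  obtain ⟨c, hℓc, horth, hnorm⟩ := exists_mem_ker_orthogonal_norm_eq
    (by rw [finrank_euclideanSpace_fin]; lia) ℓ v (norm_nonneg v)
  obtain ⟨G, hG, hG_zero, hG_deriv, hpos⟩ :=
    exists_differentiableOn_deriv_eq_forall_pos (sub_pos.2 hp) hle
  refine hasConformalDisk_of_planeMap hnorm horth hG hG_zero hG_deriv fun z hz => ?_
  simp only [mem_ofPred_eq, planeMap_apply, map_add, map_smul, hℓc, smul_eq_mul]
  linarith [hpos z hz]

theorem hasConformalDisk_halfspace_iff {d : ℕ} (hd : 3 ≤ d) (ℓ : Euc d →L[ℝ] ℝ) {a : ℝ}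
    {p v : Euc d} (hp : a < ℓ p) {r : ℝ} :
    HasConformalDisk {x | a < ℓ x} p v r ↔ |r * ℓ v| ≤ 2 * (ℓ p - a) := by
  refine ⟨?_, hasConformalDisk_halfspace_of_le hd ℓ hp⟩
  rintro ⟨f, hf, hmem, rfl, hpd⟩
  simpa [hpd] using hf.abs_apply_pd_zero_le ℓ hmem

theorem minimal_metric_halfspace_general {d : ℕ} (hd : 3 ≤ d) (ℓ : Euc d →L[ℝ] ℝ) {a : ℝ}
    {p : Euc d} (hp : a < ℓ p) (v : Euc d) :
    minMetric {x | a < ℓ x} p v = |ℓ v| / (2 * (ℓ p - a)) := by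
  have hheight : 0 < 2 * (ℓ p - a) := by linarith
  refine minMetric_eq_of_hasConformalDisk_iff (by positivity) fun r hr => ?_
  rw [hasConformalDisk_halfspace_iff hd ℓ hp, abs_mul, abs_of_pos hr,
    div_le_div_iff₀ hheight hr, one_mul, mul_comm]

/-- The minimal metric of the half-space
`ℍ^d = {x ∈ ℝ^d : x₀ > 0}` (`d ≥ 3`) is `g_{ℍ^d}((x,y),(u,v)) = |u|/(2x)`. -/
theorem minimal_metric_halfspace
    (d : ℕ) (hd : 3 ≤ d) (p v : Euc d) (hp : 0 < p ⟨0, by omega⟩) :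
    minMetric {x : Euc d | 0 < x ⟨0, by omega⟩} p v
      = |v ⟨0, by omega⟩| / (2 * p ⟨0, by omega⟩) := by
  simpa using minimal_metric_halfspace_general hd (EuclideanSpace.proj ⟨0, by omega⟩) hp v
end
end
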